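/- Let (x_1,…,x_{n+1}) ∈ (ℂ^*)^{n+1} satisfy x_i b_j ∉ qᶻ for all 1 ≤ i, j ≤ n+1. Then each series J(x̂_i) converges absolutely and Σ_{i=1}^{n+1} (−1)^{i−1} J(x̂_i) = C₀ · θ(x_1⋯x_{n+1} b_1⋯b_{n+1}) / ∏_{i=1}^{n+1} ∏_{j=1}^{n+1} θ(x_i b_j) · ∏_{1≤i<j≤n+1} x_j θ(x_i/x_j), where C₀ := (1−q)ⁿ (q)_∞ⁿ ∏_{i=1}^{n+1} ∏_{j=1}^{n+1} (q a_i⁻¹ b_j⁻¹)_∞ / (q a_1⁻¹⋯a_{n+1}⁻¹ b_1⁻¹⋯b_{n+1}⁻¹)_∞. (Bilateral extension of Evans's q-Dixon–Anderson integral; Theorem 4.1 of the paper.) -/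

import Mathlib

/-!
Clearing the poles with `∏ θ(x_i b_j)` and expanding the Vandermonde determinant turns the
alternating sum of Jackson integrals into one determinant of one-variable bilateral series, the
moments, taken at the points `x_0, …, x_n` with parameters `α_j = q / a_j`. A telescoping sum
gives a linear relation between the moments, and from it a recursion of the determinant under
`α_l ↦ q α_l`. Iterating the recursion sends `α` to `0` and produces the product of shifted
factorials in the constant.

At `α = 0` both sides, as functions of `x_0`, have the quasi-periodicity of the theta product
`∏_j θ(x_0 b_j)`. Once they agree at its zeros `b_l⁻¹`, their difference is a constant multiple of
it, and the constant is zero because both sides vanish at `x_0 = x_1`.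

At `x_0 = b_l⁻¹` the value is found by moving from `α = 0` to `α = q b` with the same recursion:
there the series based at `b_l⁻¹` terminate, and the determinant reduces to one of size `n`. This
needs the `b_j` to be distinct modulo `q^ℤ`, a condition that holds on a dense set.
-/

open scoped BigOperators
open Finset

/-- The infinite q-Pochhammer symbol `(a)_∞ = ∏_{i=0}^∞ (1 - qⁱ a)`. -/
noncomputable def qp (q a : ℂ) : ℂ := ∏' i : ℕ, (1 - q ^ i * a)

/-- The theta function `θ(a) = (a)_∞ (q/a)_∞`. -/
noncomputable def th (q a : ℂ) : ℂ := qp q a * qp q (q / a)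

/-- Summand of the Jackson integral of Dixon–Anderson type. -/
noncomputable def daTerm {n : ℕ} (q : ℂ) (a b : Fin (n + 1) → ℂ) (x : Fin n → ℂ)
    (ν : Fin n → ℤ) : ℂ :=
  (∏ i, (x i * q ^ ν i *
      ∏ j, qp q (q * (a j)⁻¹ * (x i * q ^ ν i)) / qp q (b j * (x i * q ^ ν i)))) *
    ∏ i, ∏ j ∈ Finset.Ioi i, (x j * q ^ ν j - x i * q ^ ν i)

/-- The Jackson integral of Dixon–Anderson type `J(x)`. -/
noncomputable def daSum {n : ℕ} (q : ℂ) (a b : Fin (n + 1) → ℂ) (x : Fin n → ℂ) : ℂ :=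
  (1 - q) ^ n * ∑' ν : Fin n → ℤ, daTerm q a b x ν

section

open Filter Topology

variable {q : ℂ}

/-! ### The infinite `q`-shifted factorial and the theta function -/

lemma summable_norm_pow_mul (hq : ‖q‖ < 1) (z : ℂ) : Summable fun i : ℕ => ‖-(q ^ i * z)‖ := by
  simp only [norm_neg, norm_mul, norm_pow]
  exact (summable_geometric_of_lt_one (norm_nonneg _) hq).mul_right _

lemma multipliable_qp (hq : ‖q‖ < 1) (z : ℂ) : Multipliable fun i : ℕ => (1 - q ^ i * z) := by
  simpa only [sub_eq_add_neg] using multipliable_one_add_of_summable (summable_norm_pow_mul hq z)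

lemma qp_eq_mul_qp (hq : ‖q‖ < 1) (z : ℂ) : qp q z = (1 - z) * qp q (q * z) := by
  have h := tprod_eq_zero_mul' (f := fun i : ℕ => (1 - q ^ i * z))
    (by simpa only [pow_succ, mul_assoc] using multipliable_qp hq (q * z))
  simpa only [qp, pow_zero, one_mul, pow_succ, mul_assoc] using h

lemma qp_zero_right (q : ℂ) : qp q 0 = 1 := by simp [qp]

lemma qp_ne_zero (hq : ‖q‖ < 1) {z : ℂ} (h : ∀ i : ℕ, q ^ i * z ≠ 1) : qp q z ≠ 0 := by
  have := tprod_one_add_ne_zero_of_summable (f := fun i : ℕ => -(q ^ i * z))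
    (fun i => by simpa only [← sub_eq_add_neg] using sub_ne_zero.2 (h i).symm)
    (summable_norm_pow_mul hq z)
  simpa only [qp, sub_eq_add_neg] using this

lemma qp_ne_zero_of_norm_lt_one (hq : ‖q‖ < 1) {z : ℂ} (hz : ‖z‖ < 1) : qp q z ≠ 0 := by
  refine qp_ne_zero hq fun i hi => ?_
  have h : ‖q ^ i * z‖ < 1 := by
    rw [norm_mul, norm_pow]
    exact mul_lt_one_of_nonneg_of_lt_one_right (pow_le_one₀ (norm_nonneg _) hq.le)
      (norm_nonneg _) hz
  simp [hi] at h

lemma differentiable_qp (hq : ‖q‖ < 1) : Differentiable ℂ (qp q) := by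
  intro z
  have hprod := Summable.hasProdLocallyUniformlyOn_nat_one_add (K := Metric.ball (0 : ℂ) (‖z‖ + 1))
    (f := fun (i : ℕ) (z : ℂ) => -(q ^ i * z)) (u := fun i => ‖q‖ ^ i * (‖z‖ + 1))
    Metric.isOpen_ball ((summable_geometric_of_lt_one (norm_nonneg _) hq).mul_right _)
    (Eventually.of_forall fun i w hw => by
      have : ‖w‖ < ‖z‖ + 1 := by simpa using hw
      simp only [norm_neg, norm_mul, norm_pow]
      gcongr)
    (fun i => by fun_prop)
  have hdiff := hprod.differentiableOn (Eventually.of_forall fun s => by fun_prop)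
    Metric.isOpen_ball
  refine (hdiff.differentiableAt (x := z) (Metric.isOpen_ball.mem_nhds
    (by simp))).congr_of_eventuallyEq (.of_forall fun w => ?_)
  simp only [qp, sub_eq_add_neg]

lemma continuous_qp (hq : ‖q‖ < 1) : Continuous (qp q) := (differentiable_qp hq).continuous

lemma th_one (hq : ‖q‖ < 1) : th q 1 = 0 := by rw [th, qp_eq_mul_qp hq 1, sub_self]; ring

lemma th_q_mul (hq0 : q ≠ 0) (hq : ‖q‖ < 1) {y : ℂ} (hy : y ≠ 0) :
    th q (q * y) = -th q y / y := by
  rw [th, th, qp_eq_mul_qp hq y, show q / (q * y) = y⁻¹ by field_simp, qp_eq_mul_qp hq y⁻¹,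
    ← div_eq_mul_inv]
  field_simp
  ring

lemma th_inv (hq0 : q ≠ 0) (hq : ‖q‖ < 1) {y : ℂ} (hy : y ≠ 0) : th q y⁻¹ = -th q y / y := by
  rw [← th_q_mul hq0 hq hy, th, th, mul_comm]
  congr 2 <;> field_simp

lemma th_ne_zero (hq0 : q ≠ 0) (hq : ‖q‖ < 1) {y : ℂ} (h : ∀ m : ℤ, y ≠ q ^ m) : th q y ≠ 0 := by
  refine mul_ne_zero (qp_ne_zero hq fun i hi => h (-i) ?_) (qp_ne_zero hq fun i hi => h (i + 1) ?_)
  · rw [zpow_neg, zpow_natCast]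
    exact eq_inv_of_mul_eq_one_right hi
  · have hy : y ≠ 0 := by rintro rfl; simp at hi
    rw [zpow_add₀ hq0, zpow_natCast, zpow_one]
    field_simp at hi
    exact hi.symm

lemma differentiableAt_th (hq : ‖q‖ < 1) {y : ℂ} (hy : y ≠ 0) : DifferentiableAt ℂ (th q) y := by
  have hqp := differentiable_qp hq
  exact (hqp y).fun_mul ((hqp _).fun_comp' y (by fun_prop (disch := exact hy)))

/-- The theta function with half of its zeros divided out: `θ(u) / (u q ^ ν)_∞`, written so that it
is visibly holomorphic on all of `ℂ^*`. -/
noncomputable def thetaQuot (q : ℂ) (ν : ℤ) (u : ℂ) : ℂ :=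
  (-u) ^ ν * q ^ (ν * (ν - 1) / 2) * qp q (q ^ (1 - ν) / u)

lemma mul_sub_one_ediv_two_add_one (ν : ℤ) :
    (ν + 1) * (ν + 1 - 1) / 2 = ν * (ν - 1) / 2 + ν := by
  rw [← Int.add_mul_ediv_right _ _ two_ne_zero]
  congr 1
  ring

lemma thetaQuot_add_one (hq0 : q ≠ 0) (hq : ‖q‖ < 1) {u : ℂ} (hu : u ≠ 0) (ν : ℤ) :
    thetaQuot q (ν + 1) u = (1 - u * q ^ ν) * thetaQuot q ν u := by
  have hqν : q ^ ν ≠ 0 := zpow_ne_zero _ hq0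
  rw [thetaQuot, thetaQuot, mul_sub_one_ediv_two_add_one, zpow_add_one₀ (neg_ne_zero.2 hu),
    zpow_add₀ hq0, show (1 : ℤ) - (ν + 1) = -ν by ring, qp_eq_mul_qp hq (q ^ (-ν) / u),
    zpow_sub₀ hq0, zpow_one, zpow_neg, mul_div_assoc' q, ← div_eq_mul_inv q]
  field_simp
  ring

lemma thetaQuot_zero (q u : ℂ) : thetaQuot q 0 u = qp q (q / u) := by simp [thetaQuot]

lemma qp_mul_thetaQuot (hq0 : q ≠ 0) (hq : ‖q‖ < 1) {u : ℂ} (hu : u ≠ 0) (ν : ℤ) :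
    qp q (u * q ^ ν) * thetaQuot q ν u = th q u := by
  have hper : Function.Periodic (fun ν : ℤ => qp q (u * q ^ ν) * thetaQuot q ν u) 1 := fun ν => by
    simp only [thetaQuot_add_one hq0 hq hu, qp_eq_mul_qp hq (u * q ^ ν), zpow_add_one₀ hq0]
    rw [show q * (u * q ^ ν) = u * (q ^ ν * q) by ring]
    ring
  simpa [thetaQuot_zero, th] using hper.int_mul_eq ν

lemma thetaQuot_q_mul (hq0 : q ≠ 0) {u : ℂ} (hu : u ≠ 0) (ν : ℤ) :
    thetaQuot q ν (q * u) = -u⁻¹ * thetaQuot q (ν + 1) u := by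
  have harg : q ^ (1 - ν) / (q * u) = q ^ (1 - (ν + 1)) / u := by
    rw [show (1 : ℤ) - (ν + 1) = 1 - ν - 1 by ring, zpow_sub_one₀ hq0 (1 - ν)]
    field_simp
  rw [thetaQuot, thetaQuot, mul_sub_one_ediv_two_add_one, harg, neg_mul_eq_mul_neg, mul_zpow,
    zpow_add_one₀ (neg_ne_zero.2 hu), zpow_add₀ hq0]
  field_simp

lemma differentiableAt_thetaQuot (hq : ‖q‖ < 1) {u : ℂ} (hu : u ≠ 0) (ν : ℤ) :
    DifferentiableAt ℂ (thetaQuot q ν) u := by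
  have hqp : DifferentiableAt ℂ (fun u => qp q (q ^ (1 - ν) / u)) u :=
    (differentiable_qp hq _).fun_comp' u (by fun_prop (disch := exact hu))
  have hpow : DifferentiableAt ℂ (fun u : ℂ => (-u) ^ ν) u :=
    differentiableAt_id.neg.zpow (.inl (neg_ne_zero.2 hu))
  exact (hpow.mul_const _).fun_mul hqp

lemma tendsto_thetaQuot_atTop (hq0 : q ≠ 0) (hq : ‖q‖ < 1) {u : ℂ} (hu : u ≠ 0) :
    Tendsto (fun n : ℕ => thetaQuot q n u) atTop (𝓝 (th q u)) := by
  have hqp : Tendsto (fun n : ℕ => qp q (u * q ^ (n : ℤ))) atTop (𝓝 1) := by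
    have := ((continuous_qp hq).tendsto (u * 0)).comp
      ((tendsto_pow_atTop_nhds_zero_of_norm_lt_one hq).const_mul u)
    simpa [Function.comp_def, qp_zero_right] using this
  have hquot := (tendsto_const_nhds (x := th q u)).div hqp one_ne_zero
  rw [div_one] at hquot
  refine hquot.congr' ?_
  filter_upwards [hqp.eventually_ne one_ne_zero] with n hn
  rw [Pi.div_apply, ← qp_mul_thetaQuot hq0 hq hu n, mul_div_cancel_left₀ _ hn]

lemma qp_mul_thetaQuot_one (hq0 : q ≠ 0) (hq : ‖q‖ < 1) (ν : ℤ) :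
    qp q (q ^ (ν + 1)) * thetaQuot q ν 1 = if ν = 0 then qp q q ^ 2 else 0 := by
  split_ifs with hν
  · simp [hν, thetaQuot_zero, sq]
  · have hth : (1 - q ^ ν) * (qp q (q ^ (ν + 1)) * thetaQuot q ν 1) = 0 := by
      rw [← th_one hq, ← qp_mul_thetaQuot hq0 hq one_ne_zero ν, one_mul, qp_eq_mul_qp hq (q ^ ν),
        zpow_add_one₀ hq0, mul_comm q, mul_assoc]
    refine (mul_eq_zero.1 hth).resolve_left (sub_ne_zero.2 fun h => hν ?_)
    exact (zpow_eq_one_iff_right₀ (norm_nonneg q) hq.ne).1 (by rw [← norm_zpow, ← h, norm_one])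

lemma deriv_th_ne_zero (hq0 : q ≠ 0) (hq : ‖q‖ < 1) {y : ℂ} (hy : y ≠ 0) (h : th q y = 0) :
    deriv (th q) y ≠ 0 := by
  obtain ⟨m, rfl⟩ : ∃ m : ℤ, y = q ^ m := by
    contrapose! h
    exact th_ne_zero hq0 hq h
  set g : ℂ → ℂ := fun u => qp q (u * q ^ (-m + 1)) * thetaQuot q (-m) u
  have hth : th q =ᶠ[𝓝 (q ^ m)] fun u => (1 - u * q ^ (-m)) * g u := by
    filter_upwards [isOpen_ne.mem_nhds hy] with u hu
    rw [← qp_mul_thetaQuot hq0 hq hu (-m), qp_eq_mul_qp hq]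
    simp only [g, zpow_add_one₀ hq0]
    rw [show q * (u * q ^ (-m)) = u * (q ^ (-m) * q) by ring, mul_assoc]
  have hg : DifferentiableAt ℂ g (q ^ m) :=
    ((differentiable_qp hq _).fun_comp' _ (by fun_prop)).fun_mul
      (differentiableAt_thetaQuot hq hy _)
  have hderiv : deriv (th q) (q ^ m) = -q ^ (-m) * g (q ^ m) := by
    have h1 : HasDerivAt (fun u : ℂ => 1 - u * q ^ (-m)) (-(1 * q ^ (-m))) (q ^ m) :=
      ((hasDerivAt_id _).mul_const _).const_sub 1
    rw [hth.deriv_eq, (h1.fun_mul hg.hasDerivAt).deriv]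
    simp [hy]
  have hqq : qp q q ≠ 0 := qp_ne_zero_of_norm_lt_one hq hq
  have hgq : g (q ^ m) = qp q q * thetaQuot q (-m) (q ^ m) := by
    simp only [g, ← zpow_add₀ hq0]
    simp
  have hquot : thetaQuot q (-m) (q ^ m) ≠ 0 := by
    rw [thetaQuot, ← zpow_sub₀ hq0]
    simp [hqq, zpow_ne_zero, hq0]
  rw [hderiv, hgq]
  exact mul_ne_zero (neg_ne_zero.2 (zpow_ne_zero _ hq0)) (mul_ne_zero hqq hquot)

/-! ### A ratio test uniform in parameters -/

section RatioTest

variable {P 𝕜 E : Type*} [TopologicalSpace P] [NormedField 𝕜] [SeminormedAddCommGroup E] {p₀ : P}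

lemma exists_summable_bound_of_norm_ratio_le {f : ℕ → P → E} {ρ : ℝ}
    (hf : ∀ n, ContinuousAt (f n) p₀) (hρ0 : 0 ≤ ρ) (hρ1 : ρ < 1)
    (hratio : ∀ᶠ np in atTop ×ˢ 𝓝 p₀, ‖f (np.1 + 1) np.2‖ ≤ ρ * ‖f np.1 np.2‖) :
    ∃ u : ℕ → ℝ, Summable u ∧ ∀ᶠ p in 𝓝 p₀, ∀ n, ‖f n p‖ ≤ u n := by
  obtain ⟨pa, hpa, pb, hpb, hratio⟩ := eventually_prod_iff.1 hratio
  obtain ⟨N, hN⟩ := eventually_atTop.1 hpa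
  set c : ℕ → ℝ := fun n => ‖f n p₀‖ + 1
  have hhead : ∀ᶠ p in 𝓝 p₀, ∀ n ∈ range (N + 1), ‖f n p‖ ≤ c n :=
    (Finset.eventually_all _).2 fun n _ => (hf n).norm.eventually_le_const (lt_add_one _)
  refine ⟨fun n => if n < N then c n else c N * ρ ^ (n - N), ?_, ?_⟩
  · rw [← summable_nat_add_iff N]
    simpa using (summable_geometric_of_lt_one hρ0 hρ1).mul_left (c N)
  · filter_upwards [hpb, hhead] with p hp hhead n
    split_ifs with hn
    · exact hhead n (mem_range.2 (by lia))
    · obtain ⟨k, rfl⟩ := Nat.exists_eq_add_of_le (not_lt.1 hn)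
      rw [Nat.add_sub_cancel_left]
      clear hn
      induction k with
      | zero => simpa using hhead N (self_mem_range_succ N)
      | succ k ih =>
        calc ‖f (N + k + 1) p‖ ≤ ρ * ‖f (N + k) p‖ := hratio (hN _ (by lia)) hp
          _ ≤ ρ * (c N * ρ ^ k) := by gcongr
          _ = c N * ρ ^ (k + 1) := by ring

lemma exists_summable_bound_of_smul_eq_smul [NormedSpace 𝕜 E] {f : ℕ → P → E} {A B : ℕ × P → 𝕜}
    {a b : 𝕜} (hf : ∀ n, ContinuousAt (f n) p₀) (hA : Tendsto A (atTop ×ˢ 𝓝 p₀) (𝓝 a))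
    (hB : Tendsto B (atTop ×ˢ 𝓝 p₀) (𝓝 b)) (hab : ‖b‖ < ‖a‖)
    (hrec : ∀ᶠ np in atTop ×ˢ 𝓝 p₀, A np • f (np.1 + 1) np.2 = B np • f np.1 np.2) :
    ∃ u : ℕ → ℝ, Summable u ∧ ∀ᶠ p in 𝓝 p₀, ∀ n, ‖f n p‖ ≤ u n := by
  have ha : 0 < ‖a‖ := (norm_nonneg b).trans_lt hab
  obtain ⟨ρ, hbρ, hρ1⟩ := exists_between ((div_lt_one ha).2 hab)
  have hρ0 : 0 ≤ ρ := (div_nonneg (norm_nonneg b) ha.le).trans hbρ.le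
  refine exists_summable_bound_of_norm_ratio_le hf hρ0 hρ1 ?_
  filter_upwards [hB.norm.eventually_lt (hA.norm.const_mul ρ) ((div_lt_iff₀ ha).1 hbρ),
    hA.norm.eventually_const_lt ha, hrec] with ⟨n, p⟩ hBA hA0 hrec
  refine le_of_mul_le_mul_left ?_ hA0
  calc ‖A (n, p)‖ * ‖f (n + 1) p‖ = ‖B (n, p)‖ * ‖f n p‖ := by rw [← norm_smul, hrec, norm_smul]
    _ ≤ ρ * ‖A (n, p)‖ * ‖f n p‖ := by gcongr
    _ = ‖A (n, p)‖ * (ρ * ‖f n p‖) := by ring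

lemma exists_summable_bound_int {f : ℤ → P → E}
    (hpos : ∃ u : ℕ → ℝ, Summable u ∧ ∀ᶠ p in 𝓝 p₀, ∀ n : ℕ, ‖f n p‖ ≤ u n)
    (hneg : ∃ u : ℕ → ℝ, Summable u ∧ ∀ᶠ p in 𝓝 p₀, ∀ n : ℕ, ‖f (-n) p‖ ≤ u n) :
    ∃ u : ℤ → ℝ, Summable u ∧ ∀ᶠ p in 𝓝 p₀, ∀ ν, ‖f ν p‖ ≤ u ν := by
  obtain ⟨u, hu, hfu⟩ := hpos
  obtain ⟨v, hv, hfv⟩ := hneg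
  have hu0 : ∀ n, 0 ≤ u n := fun n => (norm_nonneg _).trans (hfu.self_of_nhds n)
  have hv0 : ∀ n, 0 ≤ v n := fun n => (norm_nonneg _).trans (hfv.self_of_nhds n)
  refine ⟨fun ν => u ν.natAbs + v ν.natAbs, ?_, ?_⟩
  · refine Summable.of_nat_of_neg ?_ ?_ <;> simpa using hu.add hv
  · filter_upwards [hfu, hfv] with p hpu hpv ν
    obtain ⟨n, rfl | rfl⟩ := ν.eq_nat_or_neg
    · simpa using (hpu n).trans (le_add_of_nonneg_right (hv0 n))
    · simpa using (hpv n).trans (le_add_of_nonneg_left (hu0 n))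

end RatioTest

/-! ### Moments of the one-variable weight -/

section Moments

variable {ι : Type*} [Fintype ι]

/-- `∏ⱼ θ(x bⱼ) · z ^ s ∏ⱼ (αⱼ z)_∞ / (bⱼ z)_∞` at the lattice point `z = x q ^ ν`: the weight
of the Jackson integral times a power of the variable, with its poles in `x` cleared. The parameter
`αⱼ` stands for `q / aⱼ`, so that `aⱼ = ∞` becomes a regular point. -/
noncomputable def momentTerm (q : ℂ) (α b : ι → ℂ) (s : ℕ) (x : ℂ) (ν : ℤ) : ℂ :=
  (x * q ^ ν) ^ s * ∏ j, qp q (α j * (x * q ^ ν)) * thetaQuot q ν (x * b j)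

/-- The `s`-th moment, along the lattice `x q ^ ℤ`, of the one-variable weight with its poles
cleared. -/
noncomputable def moment (q : ℂ) (α b : ι → ℂ) (s : ℕ) (x : ℂ) : ℂ :=
  ∑' ν, momentTerm q α b s x ν

variable {α b : ι → ℂ} {x : ℂ} {s : ℕ}

lemma momentTerm_add_one (hq0 : q ≠ 0) (hq : ‖q‖ < 1) (hx : x ≠ 0) (hb : ∀ j, b j ≠ 0) (ν : ℤ) :
    (∏ j, (1 - α j * (x * q ^ ν))) * momentTerm q α b s x (ν + 1) =
      q ^ s * (∏ j, (1 - b j * (x * q ^ ν))) * momentTerm q α b s x ν := by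
  have hfactor : ∀ j, (1 - α j * (x * q ^ ν)) *
      (qp q (α j * (x * q ^ (ν + 1))) * thetaQuot q (ν + 1) (x * b j)) =
      (1 - b j * (x * q ^ ν)) * (qp q (α j * (x * q ^ ν)) * thetaQuot q ν (x * b j)) := fun j => by
    rw [thetaQuot_add_one hq0 hq (mul_ne_zero hx (hb j)), qp_eq_mul_qp hq (α j * (x * q ^ ν)),
      zpow_add_one₀ hq0, show q * (α j * (x * q ^ ν)) = α j * (x * (q ^ ν * q)) by ring]
    ring
  rw [momentTerm, mul_left_comm, ← prod_mul_distrib, prod_congr rfl fun j _ => hfactor j,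
    prod_mul_distrib, momentTerm, zpow_add_one₀ hq0]
  ring

lemma momentTerm_sub_one (hq0 : q ≠ 0) (hq : ‖q‖ < 1) (hx : x ≠ 0) (hb : ∀ j, b j ≠ 0) (ν : ℤ) :
    q ^ s * (∏ j, ((x * q ^ (ν - 1))⁻¹ - b j)) * momentTerm q α b s x (ν - 1) =
      (∏ j, ((x * q ^ (ν - 1))⁻¹ - α j)) * momentTerm q α b s x ν := by
  have hfactor : ∀ c : ℂ, (x * q ^ (ν - 1))⁻¹ - c =
      (x * q ^ (ν - 1))⁻¹ * (1 - c * (x * q ^ (ν - 1))) := fun c => by field_simp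
  have hrec := momentTerm_add_one (α := α) (s := s) hq0 hq hx hb (ν - 1)
  rw [sub_add_cancel] at hrec
  simp only [hfactor, prod_mul_distrib]
  rw [mul_left_comm (q ^ s), mul_assoc, mul_assoc (∏ _, _), hrec]

lemma continuousAt_momentTerm (hq : ‖q‖ < 1) (hx : x ≠ 0) (hb : ∀ j, b j ≠ 0) (ν : ℤ) :
    ContinuousAt (fun p : (ι → ℂ) × (ι → ℂ) × ℂ => momentTerm q p.1 p.2.1 s p.2.2 ν) (α, b, x) := by
  have hqp := continuous_qp hq
  have hquot : ∀ j, ContinuousAt (fun p : (ι → ℂ) × (ι → ℂ) × ℂ =>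
      thetaQuot q ν (p.2.2 * p.2.1 j)) (α, b, x) := fun j =>
    (differentiableAt_thetaQuot hq (mul_ne_zero hx (hb j)) ν).continuousAt.comp_of_eq
      (by fun_prop) rfl
  unfold momentTerm
  fun_prop

lemma differentiableAt_momentTerm (hq : ‖q‖ < 1) (hx : x ≠ 0) (hb : ∀ j, b j ≠ 0) (ν : ℤ) :
    DifferentiableAt ℂ (fun y => momentTerm q α b s y ν) x := by
  have hqp := differentiable_qp hq
  have hquot : ∀ j, DifferentiableAt ℂ (fun y => thetaQuot q ν (y * b j)) x := fun j =>
    (differentiableAt_thetaQuot hq (mul_ne_zero hx (hb j)) ν).fun_comp' x (by fun_prop)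
  unfold momentTerm
  refine DifferentiableAt.fun_mul (by fun_prop) (DifferentiableAt.fun_finsetProd fun j _ => ?_)
  exact ((hqp _).fun_comp' x (by fun_prop)).fun_mul (hquot j)

lemma exists_summable_bound_momentTerm_natCast (hq0 : q ≠ 0) (hq : ‖q‖ < 1) (hx : x ≠ 0)
    (hb : ∀ j, b j ≠ 0) (hs : s ≠ 0) :
    ∃ u : ℕ → ℝ, Summable u ∧ ∀ᶠ p in 𝓝 (α, b, x), ∀ n : ℕ,
      ‖momentTerm q p.1 p.2.1 s p.2.2 n‖ ≤ u n := by
  set p₀ : (ι → ℂ) × (ι → ℂ) × ℂ := (α, b, x)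
  have hz : Tendsto (fun np : ℕ × ((ι → ℂ) × (ι → ℂ) × ℂ) => (np.2, np.2.2.2 * q ^ (np.1 : ℤ)))
      (atTop ×ˢ 𝓝 p₀) (𝓝 (p₀, 0)) := by
    have hx' : Tendsto (fun p : (ι → ℂ) × (ι → ℂ) × ℂ => p.2.2) (𝓝 p₀) (𝓝 x) :=
      (by fun_prop : Continuous _).tendsto p₀
    have hpow := (tendsto_pow_atTop_nhds_zero_of_norm_lt_one hq).comp
      (tendsto_fst (f := atTop) (g := 𝓝 p₀))
    exact tendsto_snd.prodMk_nhds (by simpa using (hx'.comp tendsto_snd).mul hpow)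
  have hA := (show ContinuousAt (fun w : ((ι → ℂ) × (ι → ℂ) × ℂ) × ℂ =>
    ∏ j, (1 - w.1.1 j * w.2)) (p₀, 0) by fun_prop).tendsto.comp hz
  have hB := (show ContinuousAt (fun w : ((ι → ℂ) × (ι → ℂ) × ℂ) × ℂ =>
    q ^ s * ∏ j, (1 - w.1.2.1 j * w.2)) (p₀, 0) by fun_prop).tendsto.comp hz
  refine exists_summable_bound_of_smul_eq_smul
    (fun n => continuousAt_momentTerm hq hx hb n) hA hB ?_ ?_
  · simpa using pow_lt_one₀ (norm_nonneg _) hq hs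
  · have hb' : ∀ᶠ p in 𝓝 p₀, p.2.2 ≠ 0 ∧ ∀ j, p.2.1 j ≠ 0 := by
      refine (ContinuousAt.eventually_ne (by fun_prop) hx).and (eventually_all.2 fun j => ?_)
      exact ContinuousAt.eventually_ne (by fun_prop) (hb j)
    filter_upwards [tendsto_snd.eventually hb'] with np ⟨hx', hb'⟩
    exact mod_cast momentTerm_add_one hq0 hq hx' hb' np.1

lemma exists_summable_bound_momentTerm_neg (hq0 : q ≠ 0) (hq : ‖q‖ < 1) (hx : x ≠ 0)
    (hb : ∀ j, b j ≠ 0) (hdom : ‖∏ j, α j‖ < ‖q‖ ^ s * ‖∏ j, b j‖) :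
    ∃ u : ℕ → ℝ, Summable u ∧ ∀ᶠ p in 𝓝 (α, b, x), ∀ n : ℕ,
      ‖momentTerm q p.1 p.2.1 s p.2.2 (-n)‖ ≤ u n := by
  set p₀ : (ι → ℂ) × (ι → ℂ) × ℂ := (α, b, x)
  have hz : Tendsto (fun np : ℕ × ((ι → ℂ) × (ι → ℂ) × ℂ) =>
      (np.2, (np.2.2.2 * q ^ (-(np.1 : ℤ) - 1))⁻¹)) (atTop ×ˢ 𝓝 p₀) (𝓝 (p₀, 0)) := by
    have hx' : Tendsto (fun p : (ι → ℂ) × (ι → ℂ) × ℂ => p.2.2⁻¹) (𝓝 p₀) (𝓝 x⁻¹) :=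
      (by fun_prop : Continuous fun p : (ι → ℂ) × (ι → ℂ) × ℂ => p.2.2).continuousAt.inv₀ hx
    have hpow := ((tendsto_pow_atTop_nhds_zero_of_norm_lt_one hq).comp
      (tendsto_add_atTop_nat 1)).comp (tendsto_fst (f := atTop) (g := 𝓝 p₀))
    have hexp : ∀ n : ℕ, (q ^ (-(n : ℤ) - 1))⁻¹ = q ^ (n + 1) := fun n => by
      rw [← neg_add', zpow_neg, inv_inv]
      norm_cast
    refine tendsto_snd.prodMk_nhds ?_
    simpa [hexp, Function.comp_def] using hpow.mul (hx'.comp tendsto_snd)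
  have hA := (show ContinuousAt (fun w : ((ι → ℂ) × (ι → ℂ) × ℂ) × ℂ =>
    q ^ s * ∏ j, (w.2 - w.1.2.1 j)) (p₀, 0) by fun_prop).tendsto.comp hz
  have hB := (show ContinuousAt (fun w : ((ι → ℂ) × (ι → ℂ) × ℂ) × ℂ =>
    ∏ j, (w.2 - w.1.1 j)) (p₀, 0) by fun_prop).tendsto.comp hz
  refine exists_summable_bound_of_smul_eq_smul
    (fun n => continuousAt_momentTerm hq hx hb (-n)) hA hB ?_ ?_
  · simpa [p₀, norm_prod] using hdom
  · have hb' : ∀ᶠ p in 𝓝 p₀, p.2.2 ≠ 0 ∧ ∀ j, p.2.1 j ≠ 0 := by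
      refine (ContinuousAt.eventually_ne (by fun_prop) hx).and (eventually_all.2 fun j => ?_)
      exact ContinuousAt.eventually_ne (by fun_prop) (hb j)
    filter_upwards [tendsto_snd.eventually hb'] with np ⟨hx', hb'⟩
    simpa [← neg_add'] using momentTerm_sub_one hq0 hq hx' hb' (-(np.1 : ℤ))

lemma exists_summable_bound_momentTerm (hq0 : q ≠ 0) (hq : ‖q‖ < 1) (hx : x ≠ 0)
    (hb : ∀ j, b j ≠ 0) (hs : s ≠ 0) (hdom : ‖∏ j, α j‖ < ‖q‖ ^ s * ‖∏ j, b j‖) :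
    ∃ u : ℤ → ℝ, Summable u ∧ ∀ᶠ p in 𝓝 (α, b, x), ∀ ν,
      ‖momentTerm q p.1 p.2.1 s p.2.2 ν‖ ≤ u ν :=
  exists_summable_bound_int (exists_summable_bound_momentTerm_natCast hq0 hq hx hb hs)
    (exists_summable_bound_momentTerm_neg hq0 hq hx hb hdom)

lemma summable_norm_momentTerm (hq0 : q ≠ 0) (hq : ‖q‖ < 1) (hx : x ≠ 0) (hb : ∀ j, b j ≠ 0)
    (hs : s ≠ 0) (hdom : ‖∏ j, α j‖ < ‖q‖ ^ s * ‖∏ j, b j‖) :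
    Summable fun ν => ‖momentTerm q α b s x ν‖ := by
  obtain ⟨u, hu, hle⟩ := exists_summable_bound_momentTerm hq0 hq hx hb hs hdom
  exact Summable.of_nonneg_of_le (fun _ => norm_nonneg _) hle.self_of_nhds hu

lemma continuousAt_moment (hq0 : q ≠ 0) (hq : ‖q‖ < 1) (hx : x ≠ 0) (hb : ∀ j, b j ≠ 0)
    (hs : s ≠ 0) (hdom : ‖∏ j, α j‖ < ‖q‖ ^ s * ‖∏ j, b j‖) :
    ContinuousAt (fun p : (ι → ℂ) × (ι → ℂ) × ℂ => moment q p.1 p.2.1 s p.2.2) (α, b, x) := by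
  obtain ⟨u, hu, hle⟩ := exists_summable_bound_momentTerm hq0 hq hx hb hs hdom
  exact tendsto_tsum_of_dominated_convergence hu (continuousAt_momentTerm hq hx hb) hle

lemma differentiableAt_moment (hq0 : q ≠ 0) (hq : ‖q‖ < 1) (hx : x ≠ 0) (hb : ∀ j, b j ≠ 0)
    (hs : s ≠ 0) (hdom : ‖∏ j, α j‖ < ‖q‖ ^ s * ‖∏ j, b j‖) :
    DifferentiableAt ℂ (moment q α b s) x := by
  obtain ⟨u, hu, hle⟩ := exists_summable_bound_momentTerm hq0 hq hx hb hs hdom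
  have hle_x : ∀ᶠ y in 𝓝 x, ∀ ν, ‖momentTerm q α b s y ν‖ ≤ u ν :=
    (show ContinuousAt (fun y : ℂ => (α, b, y)) x by fun_prop).tendsto.eventually hle
  obtain ⟨V, hV, hVo, hxV⟩ := eventually_nhds_iff.1 (hle_x.and (isOpen_ne.mem_nhds hx))
  exact (Complex.differentiableOn_tsum_of_summable_norm hu (fun ν y hy =>
    (differentiableAt_momentTerm hq (hV y hy).2 hb ν).differentiableWithinAt) hVo
    fun ν y hy => (hV y hy).1 ν).differentiableAt (hVo.mem_nhds hxV)

lemma moment_q_mul (hq0 : q ≠ 0) (hx : x ≠ 0) (hb : ∀ j, b j ≠ 0) :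
    moment q α b s (q * x) = (∏ j, -(x * b j)⁻¹) * moment q α b s x := by
  have hshift : ∀ ν, momentTerm q α b s (q * x) ν =
      (∏ j, -(x * b j)⁻¹) * momentTerm q α b s x (ν + 1) := fun ν => by
    simp only [momentTerm, mul_assoc q x, thetaQuot_q_mul hq0 (mul_ne_zero hx (hb _)),
      zpow_add_one₀ hq0, prod_mul_distrib]
    rw [show q * (x * q ^ ν) = x * (q ^ ν * q) by ring]
    ring
  rw [moment, tsum_congr hshift, tsum_mul_left]
  congr 1
  exact (Equiv.addRight (1 : ℤ)).tsum_eq (momentTerm q α b s x)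

end Moments

/-! ### The linear relation between the moments -/

lemma sum_Ico_neg_natCast_sub {G : Type*} [AddCommGroup G] (f : ℤ → G) (N : ℕ) :
    ∑ ν ∈ Ico (-N : ℤ) N, (f ν - f (ν + 1)) = f (-N) - f N := by
  induction N with
  | zero => simp
  | succ N ih =>
    have hIco : Ico (-(N + 1 : ℕ) : ℤ) (N + 1 : ℕ) =
        insert (-N - 1 : ℤ) (insert (N : ℤ) (Ico (-N : ℤ) N)) := by
      ext ν
      simp only [mem_Ico, mem_insert]
      lia
    rw [hIco, sum_insert (by simp), sum_insert (by simp), ih, sub_add_cancel, Nat.cast_add_one,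
      neg_add']
    abel

lemma eq_sub_of_hasSum_int_sub_add_one {G : Type*} [AddCommGroup G] [TopologicalSpace G]
    [IsTopologicalAddGroup G] [T2Space G] {f : ℤ → G} {S a b : G}
    (hS : HasSum (fun ν => f ν - f (ν + 1)) S)
    (ha : Tendsto (fun n : ℕ => f (-n)) atTop (𝓝 a)) (hb : Tendsto (fun n : ℕ => f n) atTop (𝓝 b)) :
    S = a - b := by
  have hIco : Tendsto (fun N : ℕ => Ico (-N : ℤ) N) atTop atTop :=
    tendsto_Ico_neg_atTop_atTop.comp tendsto_natCast_atTop_atTop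
  exact tendsto_nhds_unique ((hS.comp hIco).congr (sum_Ico_neg_natCast_sub f)) (ha.sub hb)

lemma lt_norm_pow_mul_of_le (hq : ‖q‖ < 1) {k n : ℕ} (hkn : k ≤ n) {c : ℝ} {z : ℂ}
    (h : c < ‖q‖ ^ n * ‖z‖) : c < ‖q‖ ^ k * ‖z‖ :=
  h.trans_le <| mul_le_mul_of_nonneg_right
    (pow_le_pow_of_le_one (norm_nonneg _) hq.le hkn) (norm_nonneg _)

section Relation

variable {n : ℕ} {α b : Fin (n + 1) → ℂ} {x : ℂ}

open Polynomial in
/-- The polynomial whose coefficients relate the moments: the weight for the parameters `q⁻¹ α`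
changes by `z ^ (n + 1) · momentPoly(z⁻¹)` times the weight for `α` along the lattice. -/
noncomputable def momentPoly (q : ℂ) (α b : Fin (n + 1) → ℂ) : ℂ[X] :=
  ∏ j, (X - C (q⁻¹ * α j)) - ∏ j, (X - C (b j))

lemma natDegree_momentPoly_le (q : ℂ) (α b : Fin (n + 1) → ℂ) :
    (momentPoly q α b).natDegree ≤ n := by
  have hα := Polynomial.monic_prod_X_sub_C (fun j => q⁻¹ * α j) univ
  have hb := Polynomial.monic_prod_X_sub_C b univ
  have hdegα := Polynomial.natDegree_finsetProd_X_sub_C_eq_card univ fun j => q⁻¹ * α j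
  have hdegb := Polynomial.natDegree_finsetProd_X_sub_C_eq_card univ b
  have hdeg : (∏ j, (Polynomial.X - Polynomial.C (q⁻¹ * α j))).degree =
      (∏ j, (Polynomial.X - Polynomial.C (b j))).degree := by
    rw [Polynomial.degree_eq_natDegree hα.ne_zero, Polynomial.degree_eq_natDegree hb.ne_zero,
      hdegα, hdegb]
  have hlt := Polynomial.degree_sub_lt_left hdeg hα.ne_zero
    (hα.leadingCoeff.trans hb.leadingCoeff.symm)
  rw [Polynomial.degree_eq_natDegree hα.ne_zero, hdegα, card_univ, Fintype.card_fin] at hlt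
  exact Polynomial.natDegree_le_of_degree_le (Order.le_of_lt_succ hlt)

lemma eval_momentPoly (q : ℂ) (α b : Fin (n + 1) → ℂ) (z : ℂ) :
    (momentPoly q α b).eval z = ∏ j, (z - q⁻¹ * α j) - ∏ j, (z - b j) := by
  simp [momentPoly, Polynomial.eval_prod]

lemma sum_coeff_momentPoly_mul_pow (q : ℂ) (α b : Fin (n + 1) → ℂ) {z : ℂ} (hz : z ≠ 0) :
    ∑ k : Fin (n + 1), (momentPoly q α b).coeff (n - k) * z ^ (k + 1 : ℕ) =
      ∏ j, (1 - q⁻¹ * α j * z) - ∏ j, (1 - b j * z) := by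
  have hprod : ∀ c : Fin (n + 1) → ℂ, ∏ j, (1 - c j * z) = z ^ (n + 1) * ∏ j, (z⁻¹ - c j) := by
    intro c
    rw [← Fin.prod_const (n + 1) z, ← prod_mul_distrib]
    exact prod_congr rfl fun j _ => by field_simp
  rw [hprod, hprod, ← mul_sub, ← eval_momentPoly,
    Polynomial.eval_eq_sum_range' (Nat.lt_succ_of_le (natDegree_momentPoly_le q α b)),
    ← sum_range_reflect, sum_range, mul_sum]
  refine sum_congr rfl fun k _ => ?_
  have hpow : z ^ (n + 1) = z ^ (k + 1 : ℕ) * z ^ (n - k : ℕ) := by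
    rw [← pow_add]
    congr 1
    lia
  rw [show n + 1 - 1 - (k : ℕ) = n - k by lia, hpow, inv_pow]
  field_simp

lemma momentTerm_sub_momentTerm_add_one (hq0 : q ≠ 0) (hq : ‖q‖ < 1) (hx : x ≠ 0)
    (hb : ∀ j, b j ≠ 0) (ν : ℤ) :
    momentTerm q (fun j => q⁻¹ * α j) b 0 x ν - momentTerm q (fun j => q⁻¹ * α j) b 0 x (ν + 1) =
      ∑ k : Fin (n + 1), (momentPoly q α b).coeff (n - k) * momentTerm q α b (k + 1) x ν := by
  set z := x * q ^ ν with hz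
  have hz0 : z ≠ 0 := mul_ne_zero hx (zpow_ne_zero _ hq0)
  set w := ∏ j, qp q (α j * z) * thetaQuot q ν (x * b j) with hw
  have hν : momentTerm q (fun j => q⁻¹ * α j) b 0 x ν = (∏ j, (1 - q⁻¹ * α j * z)) * w := by
    rw [momentTerm, ← hz, pow_zero, one_mul, hw, ← prod_mul_distrib]
    refine prod_congr rfl fun j _ => ?_
    rw [qp_eq_mul_qp hq, show q * (q⁻¹ * α j * z) = α j * z by field_simp]
    ring
  have hν1 : momentTerm q (fun j => q⁻¹ * α j) b 0 x (ν + 1) = (∏ j, (1 - b j * z)) * w := by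
    rw [momentTerm, zpow_add_one₀ hq0, ← mul_assoc, ← hz, pow_zero, one_mul, hw, ← prod_mul_distrib]
    refine prod_congr rfl fun j _ => ?_
    rw [thetaQuot_add_one hq0 hq (mul_ne_zero hx (hb j)),
      show q⁻¹ * α j * (z * q) = α j * z by field_simp]
    ring
  rw [hν, hν1, ← sub_mul, ← sum_coeff_momentPoly_mul_pow q α b hz0, sum_mul]
  exact sum_congr rfl fun k _ => by rw [momentTerm]; ring

lemma sum_coeff_momentPoly_mul_moment (hq0 : q ≠ 0) (hq : ‖q‖ < 1) (hx : x ≠ 0)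
    (hb : ∀ j, b j ≠ 0) (hdom : ‖∏ j, α j‖ < ‖q‖ ^ (n + 1) * ‖∏ j, b j‖) :
    ∑ k : Fin (n + 1), (momentPoly q α b).coeff (n - k) * moment q α b (k + 1) x =
      -∏ j, th q (x * b j) := by
  have hsum := hasSum_sum fun (k : Fin (n + 1)) (_ : k ∈ univ) =>
    ((summable_norm_momentTerm hq0 hq hx hb k.val.succ_ne_zero
      (lt_norm_pow_mul_of_le hq k.is_lt hdom)).of_norm.hasSum).mul_left
      ((momentPoly q α b).coeff (n - k))
  have hdom' : ‖∏ j, q⁻¹ * α j‖ < ‖q‖ ^ 0 * ‖∏ j, b j‖ := by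
    rw [prod_mul_distrib, Fin.prod_const, norm_mul, norm_pow, norm_inv, inv_pow, pow_zero, one_mul,
      inv_mul_lt_iff₀ (pow_pos (norm_pos_iff.2 hq0) _)]
    exact hdom
  have hbot : Tendsto (fun N : ℕ => momentTerm q (fun j => q⁻¹ * α j) b 0 x (-N)) atTop (𝓝 0) := by
    obtain ⟨u, hu, hle⟩ := exists_summable_bound_momentTerm_neg hq0 hq hx hb hdom'
    exact squeeze_zero_norm hle.self_of_nhds hu.tendsto_atTop_zero
  have htop : Tendsto (fun N : ℕ => momentTerm q (fun j => q⁻¹ * α j) b 0 x N) atTop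
      (𝓝 (∏ j, th q (x * b j))) := by
    have hqp : ∀ c, Tendsto (fun N : ℕ => qp q (c * (x * q ^ (N : ℤ)))) atTop (𝓝 1) := fun c => by
      have := ((continuous_qp hq).tendsto (c * (x * 0))).comp
        (((tendsto_pow_atTop_nhds_zero_of_norm_lt_one hq).const_mul x).const_mul c)
      simpa [Function.comp_def, qp_zero_right] using this
    simpa [momentTerm] using tendsto_finsetProd univ fun j _ =>
      (hqp (q⁻¹ * α j)).mul (tendsto_thetaQuot_atTop hq0 hq (mul_ne_zero hx (hb j)))
  rw [← zero_sub]
  refine eq_sub_of_hasSum_int_sub_add_one ?_ hbot htop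
  simpa only [momentTerm_sub_momentTerm_add_one hq0 hq hx hb, moment] using hsum

end Relation

/-! ### The moment determinant and its dependence on the parameters `α` -/

section LinearAlgebra

open Matrix Polynomial

variable {R : Type*} [CommRing R] {n : ℕ}

lemma det_cons_coeff (Q : R[X]) (hQ : Q.natDegree ≤ n) (a : R) :
    (Matrix.of (Fin.cons (fun k : Fin (n + 1) => Q.coeff (n - k)) fun k : Fin n =>
      Pi.single k.castSucc 1 - a • Pi.single k.succ 1 :
        Fin (n + 1) → Fin (n + 1) → R)).det = (-1) ^ n * Q.eval a := by
  set A : Matrix (Fin (n + 1)) (Fin (n + 1)) R :=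
    Matrix.of (Fin.cons (fun k : Fin (n + 1) => Q.coeff (n - k)) fun k : Fin n =>
      Pi.single k.castSucc 1 - a • Pi.single k.succ 1)
  have hcol : (fun k => ∑ i : Fin (n + 1), a ^ (n - i : ℕ) • A k i) = Pi.single 0 (Q.eval a) := by
    ext k
    refine Fin.cases ?_ (fun k => ?_) k
    · rw [Pi.single_eq_same, eval_eq_sum_range' (Nat.lt_succ_of_le hQ), ← sum_range_reflect,
        sum_range]
      simp [A, mul_comm]
    · have hk : n - (k : ℕ) = n - (k + 1) + 1 := by lia
      simp [A, mul_sub, Pi.single_apply, hk, pow_succ]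
  have htri : (A.submatrix (Fin.succAbove 0) (Fin.last n).succAbove).det = 1 := by
    rw [det_of_isUpperTriangular]
    · simp [A, Fin.ext_iff]
    · intro k j hjk
      have hjk : (j : ℕ) < k := hjk
      simp [A, Fin.ext_iff, show (j : ℕ) ≠ k by lia, show (j : ℕ) ≠ k + 1 by lia]
  have hdet := A.det_updateCol_sum (Fin.last n) fun k => a ^ (n - k : ℕ)
  rw [hcol, det_succ_column _ (Fin.last n), Fin.sum_univ_succ] at hdet
  simpa [-Fin.succAbove_last, -Fin.succAbove_zero, submatrix_updateCol_succAbove, htri, eq_comm]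
    using hdet

lemma det_cons_coeff_vecMul (Q : R[X]) (hQ : Q.natDegree ≤ n)
    (V : Matrix (Fin (n + 1)) (Fin (n + 1)) R) (a : R) :
    (Matrix.of (Fin.cons ((fun k : Fin (n + 1) => Q.coeff (n - k)) ᵥ* V)
      fun k : Fin n => V.row k.castSucc - a • V.row k.succ : Fin (n + 1) → Fin (n + 1) → R)).det =
      (-1) ^ n * Q.eval a * V.det := by
  rw [← det_cons_coeff Q hQ, ← det_mul]
  refine congrArg det (Matrix.ext fun k i => ?_)
  rw [mul_apply_eq_vecMul, of_apply]
  refine Fin.cases ?_ (fun k => ?_) k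
  · rfl
  · change _ = ((Pi.single k.castSucc 1 - a • Pi.single k.succ 1) ᵥ* V) i
    rw [sub_vecMul, smul_vecMul, single_one_vecMul, single_one_vecMul, Fin.cons_succ]

end LinearAlgebra

section Contiguity

variable {ι : Type*} [Fintype ι] [DecidableEq ι] {α b : ι → ℂ}

lemma prod_update_self_mul {M : Type*} [CommMonoid M] (f : ι → M) (c : M) (l : ι) :
    ∏ j, Function.update f l (c * f l) j = c * ∏ j, f j := by
  rw [prod_update_of_mem (mem_univ l), mul_assoc, ← erase_eq, mul_prod_erase _ _ (mem_univ l)]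

lemma moment_eq_sub_moment_update (hq0 : q ≠ 0) (hq : ‖q‖ < 1) {x : ℂ} (hx : x ≠ 0)
    (hb : ∀ j, b j ≠ 0) {s : ℕ} (hs : s ≠ 0) (hdom : ‖∏ j, α j‖ < ‖q‖ ^ s * ‖∏ j, b j‖)
    (l : ι) :
    moment q α b s x = moment q (Function.update α l (q * α l)) b s x -
      α l * moment q (Function.update α l (q * α l)) b (s + 1) x := by
  set β := Function.update α l (q * α l) with hβ
  have hfactor : ∀ z j, qp q (α j * z) = (if j = l then 1 - α l * z else 1) * qp q (β j * z) := by
    intro z j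
    rcases eq_or_ne j l with rfl | hj
    · rw [if_pos rfl, qp_eq_mul_qp hq (α j * z), hβ, Function.update_self, mul_assoc q]
    · rw [if_neg hj, one_mul, hβ, Function.update_of_ne hj]
  have hterm : ∀ ν, momentTerm q α b s x ν =
      momentTerm q β b s x ν - α l * momentTerm q β b (s + 1) x ν := fun ν => by
    simp only [momentTerm, hfactor, mul_assoc (ite _ _ _), prod_mul_distrib, prod_ite_eq', mem_univ,
      if_true]
    ring
  have hprod := prod_update_self_mul α q l
  have hdom₁ : ‖∏ j, β j‖ < ‖q‖ ^ (s + 1) * ‖∏ j, b j‖ := by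
    rw [hprod, norm_mul, pow_succ', mul_assoc]
    exact mul_lt_mul_of_pos_left hdom (norm_pos_iff.2 hq0)
  have hdom₀ : ‖∏ j, β j‖ < ‖q‖ ^ s * ‖∏ j, b j‖ :=
    lt_norm_pow_mul_of_le hq s.le_succ hdom₁
  have hsum₀ := (summable_norm_momentTerm hq0 hq hx hb hs hdom₀).of_norm
  have hsum₁ := (summable_norm_momentTerm hq0 hq hx hb s.succ_ne_zero hdom₁).of_norm
  rw [moment, tsum_congr hterm, hsum₀.tsum_sub (hsum₁.mul_left _), tsum_mul_left, moment, moment]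

end Contiguity

section MomentDet

variable {n : ℕ} {α b : Fin (n + 1) → ℂ}

/-- The column `(∏ⱼ θ(x bⱼ), moment 1, …, moment n)` at the base point `x`. Its top entry is what
turns the cofactor expansion of `momentDet` into the alternating sum of the theorem. -/
noncomputable def momentColumn (q : ℂ) (α b : Fin (n + 1) → ℂ) (x : ℂ) : Fin (n + 1) → ℂ :=
  Fin.cons (∏ j, th q (x * b j)) fun k : Fin n => moment q α b (k + 1) x

/-- The determinant of the columns `momentColumn` at the points `x₀, …, xₙ`. -/
noncomputable def momentDet (q : ℂ) (α b x : Fin (n + 1) → ℂ) : ℂ :=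
  (Matrix.of fun k i => momentColumn q α b (x i) k).det

lemma momentDet_eq_mul_det (hq0 : q ≠ 0) (hq : ‖q‖ < 1) {x : Fin (n + 1) → ℂ} (hx : ∀ i, x i ≠ 0)
    (hb : ∀ j, b j ≠ 0) {β : Fin (n + 1) → ℂ} (hdom : ‖∏ j, β j‖ < ‖q‖ ^ (n + 1) * ‖∏ j, b j‖)
    (a : ℂ) (ha : ∀ i, ∀ k : Fin n, moment q α b (k + 1) (x i) =
      moment q β b (k + 1) (x i) - a * moment q β b (k + 2) (x i)) :
    momentDet q α b x = (-1) ^ (n + 1) * (momentPoly q β b).eval a *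
      (Matrix.of fun k i : Fin (n + 1) => moment q β b (k + 1) (x i)).det := by
  have hdet := det_cons_coeff_vecMul _
    ((Polynomial.natDegree_neg _).trans_le (natDegree_momentPoly_le q β b))
    (Matrix.of fun k i : Fin (n + 1) => moment q β b (k + 1) (x i)) a
  rw [Polynomial.eval_neg] at hdet
  rw [pow_succ, mul_neg_one, neg_mul_comm, ← hdet, momentDet]
  refine congrArg Matrix.det (Matrix.ext fun k i => ?_)
  refine Fin.cases ?_ (fun k => ?_) k
  · change ∏ j, th q (x i * b j) =
      ∑ k : Fin (n + 1), (-momentPoly q β b).coeff (n - k) * moment q β b (k + 1) (x i)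
    simp only [Polynomial.coeff_neg, neg_mul, sum_neg_distrib,
      sum_coeff_momentPoly_mul_moment hq0 hq (hx i) hb hdom, neg_neg]
  · exact ha i k

lemma mul_momentDet_eq_mul_momentDet_update (hq0 : q ≠ 0) (hq : ‖q‖ < 1)
    {x : Fin (n + 1) → ℂ} (hx : ∀ i, x i ≠ 0) (hb : ∀ j, b j ≠ 0)
    (hdom : ‖∏ j, α j‖ < ‖q‖ ^ n * ‖∏ j, b j‖) (l : Fin (n + 1)) :
    (1 - (q ^ n)⁻¹ * (∏ j, α j) / ∏ j, b j) * momentDet q α b x =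
      (∏ j, (1 - α l / b j)) * momentDet q (Function.update α l (q * α l)) b x := by
  set β := Function.update α l (q * α l) with hβ
  have hβprod : ∏ j, β j = q * ∏ j, α j := prod_update_self_mul α q l
  have hdomβ : ‖∏ j, β j‖ < ‖q‖ ^ (n + 1) * ‖∏ j, b j‖ := by
    rw [hβprod, norm_mul, pow_succ', mul_assoc]
    exact mul_lt_mul_of_pos_left hdom (norm_pos_iff.2 hq0)
  have hα := momentDet_eq_mul_det (α := α) hq0 hq hx hb hdomβ (α l) fun i k =>
    moment_eq_sub_moment_update hq0 hq (hx i) hb k.val.succ_ne_zero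
      (lt_norm_pow_mul_of_le hq k.is_lt hdom) l
  have hβ0 := momentDet_eq_mul_det (α := β) hq0 hq hx hb hdomβ 0 fun i k => by simp
  have heval : (momentPoly q β b).eval (α l) = (-1) ^ n * (∏ j, b j) * ∏ j, (1 - α l / b j) := by
    have hl : ∏ j, (α l - q⁻¹ * β j) = 0 := prod_eq_zero (mem_univ l) (by simp [hβ, hq0])
    have hfactor : ∏ j, (α l - b j) = ∏ j, (-1 * b j * (1 - α l / b j)) := by
      refine prod_congr rfl fun j _ => ?_
      have := hb j
      field_simp
      ring
    rw [eval_momentPoly, hl, hfactor, prod_mul_distrib, prod_mul_distrib, Fin.prod_const]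
    ring
  have heval0 : (momentPoly q β b).eval 0 =
      (-1) ^ n * (∏ j, b j) * (1 - (q ^ n)⁻¹ * (∏ j, α j) / ∏ j, b j) := by
    have := prod_ne_zero_iff.2 fun j (_ : j ∈ univ) => hb j
    rw [eval_momentPoly]
    simp only [zero_sub, prod_neg, prod_mul_distrib, hβprod, Fin.prod_const, card_univ,
      Fintype.card_fin, pow_succ, inv_pow]
    field_simp
    ring
  rw [hα, hβ0, heval, heval0]
  ring

lemma continuousAt_momentDet (hq0 : q ≠ 0) (hq : ‖q‖ < 1) {x : Fin (n + 1) → ℂ}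
    (hx : ∀ i, x i ≠ 0) (hb : ∀ j, b j ≠ 0) (hdom : ‖∏ j, α j‖ < ‖q‖ ^ n * ‖∏ j, b j‖) :
    ContinuousAt (fun p : (Fin (n + 1) → ℂ) × (Fin (n + 1) → ℂ) × (Fin (n + 1) → ℂ) =>
      momentDet q p.1 p.2.1 p.2.2) (α, b, x) := by
  refine (continuous_id.matrix_det (R := ℂ)).continuousAt.comp (continuousAt_pi.2 fun k =>
    continuousAt_pi.2 fun i => ?_)
  refine Fin.cases ?_ (fun k => ?_) k
  · refine ContinuousAt.congr (f := fun p : (Fin (n + 1) → ℂ) × (Fin (n + 1) → ℂ) ×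
      (Fin (n + 1) → ℂ) => ∏ j, th q (p.2.2 i * p.2.1 j)) ?_ (.of_forall fun p => rfl)
    refine tendsto_finsetProd _ fun j _ => ?_
    exact (differentiableAt_th hq (mul_ne_zero (hx i) (hb j))).continuousAt.comp_of_eq
      (by fun_prop) rfl
  · have hmoment := continuousAt_moment hq0 hq (hx i) hb k.val.succ_ne_zero
      (lt_norm_pow_mul_of_le hq k.is_lt hdom)
    exact hmoment.comp_of_eq (f := fun p : (Fin (n + 1) → ℂ) × (Fin (n + 1) → ℂ) ×
      (Fin (n + 1) → ℂ) => (p.1, p.2.1, p.2.2 i)) (by fun_prop) rfl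

lemma eq_prod_qp_mul_apply_zero (hq : ‖q‖ < 1) {ι : Type*} [Fintype ι] {g : ℂ → ℂ} {c : ℂ}
    {b : ι → ℂ} (hg : ContinuousAt g 0)
    (hrec : ∀ N : ℕ, g (q ^ N * c) = (∏ j, (1 - q ^ N * c / b j)) * g (q ^ (N + 1) * c)) :
    g c = (∏ j, qp q (c / b j)) * g 0 := by
  have hpartial : ∀ N : ℕ, g c = (∏ j, ∏ i ∈ range N, (1 - q ^ i * (c / b j))) * g (q ^ N * c) := by
    intro N
    induction N with
    | zero => simp
    | succ N ih =>
      rw [ih, hrec]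
      simp only [prod_range_succ, prod_mul_distrib, mul_div_assoc, mul_assoc]
  have hprod : Tendsto (fun N => ∏ j, ∏ i ∈ range N, (1 - q ^ i * (c / b j))) atTop
      (𝓝 (∏ j, qp q (c / b j))) :=
    tendsto_finsetProd _ fun j _ => (multipliable_qp hq _).hasProd.tendsto_prod_nat
  have hq_pow : Tendsto (fun N : ℕ => q ^ N * c) atTop (𝓝 0) := by
    simpa using (tendsto_pow_atTop_nhds_zero_of_norm_lt_one hq).mul_const c
  exact tendsto_nhds_unique (tendsto_const_nhds.congr hpartial) (hprod.mul (hg.tendsto.comp hq_pow))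

lemma qp_mul_momentDet_eq_update (hq0 : q ≠ 0) (hq : ‖q‖ < 1) {x : Fin (n + 1) → ℂ}
    (hx : ∀ i, x i ≠ 0) (hb : ∀ j, b j ≠ 0) (hdom : ‖∏ j, α j‖ < ‖q‖ ^ n * ‖∏ j, b j‖)
    (l : Fin (n + 1)) :
    qp q ((q ^ n)⁻¹ * (∏ j, α j) / ∏ j, b j) * momentDet q α b x =
      (∏ j, qp q (α l / b j)) * (qp q ((q ^ n)⁻¹ * (∏ j, Function.update α l 0 j) / ∏ j, b j) *
        momentDet q (Function.update α l 0) b x) := by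
  have hb0 : 0 < ‖∏ j, b j‖ := norm_pos_iff.2 (prod_ne_zero_iff.2 fun j _ => hb j)
  set g : ℂ → ℂ := fun c => qp q ((q ^ n)⁻¹ * (∏ j, Function.update α l c j) / ∏ j, b j) *
    momentDet q (Function.update α l c) b x with hg
  have hgcont : ContinuousAt g 0 := by
    refine ContinuousAt.mul ((continuous_qp hq).comp (by fun_prop)).continuousAt ?_
    refine (continuousAt_momentDet (α := Function.update α l 0) hq0 hq hx hb ?_).comp_of_eq
      (f := fun c => (Function.update α l c, b, x)) (by fun_prop) rfl
    rw [prod_update_of_mem (mem_univ l), zero_mul, norm_zero]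
    positivity
  have hgrec : ∀ N : ℕ, g (q ^ N * α l) =
      (∏ j, (1 - q ^ N * α l / b j)) * g (q ^ (N + 1) * α l) := fun N => by
    have hprod := prod_update_self_mul α (q ^ N) l
    have hdomN : ‖∏ j, Function.update α l (q ^ N * α l) j‖ < ‖q‖ ^ n * ‖∏ j, b j‖ := by
      rw [hprod, norm_mul, norm_pow]
      exact (mul_le_of_le_one_left (norm_nonneg _)
        (pow_le_one₀ (norm_nonneg _) hq.le)).trans_lt hdom
    have hcontig := mul_momentDet_eq_mul_momentDet_update hq0 hq hx hb hdomN l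
    rw [Function.update_self, Function.update_idem, hprod, ← mul_assoc q, ← pow_succ'] at hcontig
    have hshift := prod_update_self_mul α (q ^ (N + 1)) l
    simp only [hg, hprod, hshift]
    rw [qp_eq_mul_qp hq, mul_right_comm, hcontig]
    rw [show q * ((q ^ n)⁻¹ * (q ^ N * ∏ j, α j) / ∏ j, b j) =
      (q ^ n)⁻¹ * (q ^ (N + 1) * ∏ j, α j) / ∏ j, b j by ring]
    ring
  have := eq_prod_qp_mul_apply_zero hq hgcont hgrec
  simpa only [hg, Function.update_eq_self] using this

lemma qp_mul_momentDet (hq0 : q ≠ 0) (hq : ‖q‖ < 1) {x : Fin (n + 1) → ℂ} (hx : ∀ i, x i ≠ 0)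
    (hb : ∀ j, b j ≠ 0) (hdom : ‖∏ j, α j‖ < ‖q‖ ^ n * ‖∏ j, b j‖) :
    qp q ((q ^ n)⁻¹ * (∏ j, α j) / ∏ j, b j) * momentDet q α b x =
      (∏ i, ∏ j, qp q (α i / b j)) * momentDet q 0 b x := by
  have hb0 : 0 < ‖∏ j, b j‖ := norm_pos_iff.2 (prod_ne_zero_iff.2 fun j _ => hb j)
  have hpartial : ∀ S : Finset (Fin (n + 1)),
      qp q ((q ^ n)⁻¹ * (∏ j, α j) / ∏ j, b j) * momentDet q α b x =
        (∏ i ∈ S, ∏ j, qp q (α i / b j)) * (qp q ((q ^ n)⁻¹ * (∏ j, S.piecewise 0 α j) / ∏ j, b j) *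
          momentDet q (S.piecewise 0 α) b x) := by
    intro S
    induction S using Finset.induction_on with
    | empty => simp
    | insert l S hl ih =>
      have hdomS : ‖∏ j, S.piecewise 0 α j‖ < ‖q‖ ^ n * ‖∏ j, b j‖ := by
        rcases S.eq_empty_or_nonempty with rfl | ⟨i, hi⟩
        · simpa using hdom
        · rw [prod_eq_zero (mem_univ i) (piecewise_eq_of_mem _ _ _ hi), norm_zero]
          positivity
      rw [ih, qp_mul_momentDet_eq_update hq0 hq hx hb hdomS l, prod_insert hl,
        piecewise_insert, piecewise_eq_of_notMem _ _ _ hl, Pi.zero_apply]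
      ring
  simpa [qp_zero_right] using hpartial univ

end MomentDet

/-! ### The recursion at `α = q b`, where the bilateral series terminate -/

section Recursion

open Matrix

lemma det_eq_neg_mul_det_of_rec {R : Type*} [CommRing R] {n : ℕ}
    {M : Matrix (Fin (n + 2)) (Fin (n + 2)) R} {N : Matrix (Fin (n + 1)) (Fin (n + 1)) R} {κ c : R}
    {d : Fin (n + 1) → R} (h00 : M 0 0 = 0) (hκ : ∀ k : Fin (n + 1), M k.succ 0 = c ^ (k : ℕ) * κ)
    (hM0 : ∀ i, M 0 i.succ = d i * N 0 i)
    (hM : ∀ (k : Fin n) i, M k.succ.succ i.succ =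
      c * M k.castSucc.succ i.succ - c * (d i * N k.succ i)) :
    M.det = -(κ * (-c) ^ n * (∏ i, d i) * N.det) := by
  set A : Matrix (Fin (n + 2)) (Fin (n + 2)) R := Matrix.of (Fin.cons (M 0) (Fin.cons (M 1)
    fun k : Fin n => M k.succ.succ - c • M k.castSucc.succ)) with hA
  have hdet : M.det = A.det := by
    refine det_eq_of_forall_row_eq_smul_add_pred (Fin.cons 0 fun _ => c)
      (fun _ => rfl) fun k j => ?_
    refine Fin.cases ?_ (fun k => ?_) k
    · simp [hA]
    · simp [hA, Fin.castSucc_succ]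
  have hminor : (A.submatrix (Fin.succAbove 1) Fin.succ).det =
      (-c) ^ n * ((∏ i, d i) * N.det) := by
    rw [← det_mul_row, ← Fin.prod_const n, ← one_mul (∏ _, _), ← Fin.prod_cons, ← det_mul_column]
    refine congrArg det (Matrix.ext fun k i => ?_)
    refine Fin.cases ?_ (fun k => ?_) k
    · simp [hA, hM0]
    · simp [hA, hM]
  have hcol : ∀ k, A k 0 = (Pi.single 1 κ : Fin (n + 2) → R) k := by
    refine Fin.cases ?_ (Fin.cases ?_ fun k => ?_)
    · simpa [hA] using h00
    · simpa [hA] using hκ 0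
    · rw [Pi.single_eq_of_ne (Fin.succ_succ_ne_one k)]
      simp [hA, hκ, pow_succ', mul_assoc]
  rw [hdet, det_succ_column_zero, Fintype.sum_eq_single 1 fun k hk => by
    rw [hcol, Pi.single_eq_of_ne hk]; simp, hcol, hminor]
  simp [mul_assoc]

variable {n : ℕ} {b : Fin (n + 1) → ℂ} {x : ℂ}

lemma norm_prod_smul_lt (hq0 : q ≠ 0) (hq : ‖q‖ < 1) {ι : Type*} [Fintype ι] {b : ι → ℂ}
    (hb : ∀ j, b j ≠ 0) {s : ℕ} (hs : s < Fintype.card ι) :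
    ‖∏ j, (q • b) j‖ < ‖q‖ ^ s * ‖∏ j, b j‖ := by
  have hb0 : 0 < ‖∏ j, b j‖ := norm_pos_iff.2 (prod_ne_zero_iff.2 fun j _ => hb j)
  simp only [Pi.smul_apply, smul_eq_mul, prod_mul_distrib, prod_const, norm_mul, norm_pow,
    card_univ]
  gcongr ?_ * _
  exact pow_lt_pow_right_of_lt_one₀ (norm_pos_iff.2 hq0) hq hs

lemma mul_moment_smul_succ (hq0 : q ≠ 0) (hq : ‖q‖ < 1) (hx : x ≠ 0) (hb : ∀ j, b j ≠ 0) {s : ℕ}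
    (hs0 : s ≠ 0) (hs : s < n) (l : Fin (n + 1)) :
    b l * moment q (q • b) b (s + 1) x = moment q (q • b) b s x -
      th q (x * b l) * moment q (q • l.removeNth b) (l.removeNth b) s x := by
  have hterm : ∀ ν, b l * momentTerm q (q • b) b (s + 1) x ν = momentTerm q (q • b) b s x ν -
      th q (x * b l) * momentTerm q (q • l.removeNth b) (l.removeNth b) s x ν := fun ν => by
    set z := x * q ^ ν with hz
    have hth : th q (x * b l) =
        (1 - b l * z) * (qp q (q * b l * z) * thetaQuot q ν (x * b l)) := by
      rw [← qp_mul_thetaQuot hq0 hq (mul_ne_zero hx (hb l)) ν, qp_eq_mul_qp hq, hz,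
        show x * b l * q ^ ν = b l * (x * q ^ ν) by ring, mul_assoc q]
      ring
    simp only [momentTerm, ← hz, Pi.smul_apply, smul_eq_mul, hth, Fin.prod_univ_succAbove _ l,
      Fin.removeNth_apply]
    ring
  have hb' : ∀ j, l.removeNth b j ≠ 0 := fun j => hb _
  have hsum := (summable_norm_momentTerm hq0 hq hx hb hs0
    (norm_prod_smul_lt hq0 hq hb (by simp; lia))).of_norm
  have hsum' := (summable_norm_momentTerm hq0 hq hx hb' hs0
    (norm_prod_smul_lt hq0 hq hb' (by simpa using hs))).of_norm
  rw [moment, ← tsum_mul_left, tsum_congr hterm, hsum.tsum_sub (hsum'.mul_left _), tsum_mul_left,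
    moment, moment]

lemma moment_smul_inv (hq0 : q ≠ 0) (hq : ‖q‖ < 1) (hb : ∀ j, b j ≠ 0) (s : ℕ) (l : Fin (n + 1)) :
    moment q (q • b) b s (b l)⁻¹ = (b l)⁻¹ ^ s * (qp q q ^ 2 *
      ∏ j, qp q (q * (l.removeNth b j / b l)) * qp q (q * (b l / l.removeNth b j))) := by
  have hl : ∀ ν, qp q (q * b l * ((b l)⁻¹ * q ^ ν)) * thetaQuot q ν ((b l)⁻¹ * b l) =
      if ν = 0 then qp q q ^ 2 else 0 := fun ν => by
    rw [← qp_mul_thetaQuot_one hq0 hq ν, inv_mul_cancel₀ (hb l), zpow_add_one₀ hq0]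
    congr 2
    have := hb l
    field_simp
  have hnum : ∀ j, q * b j * (b l)⁻¹ = q * (b j / b l) := fun j => by ring
  have hden : ∀ j, q / ((b l)⁻¹ * b j) = q * (b l / b j) := fun j => by
    rw [← div_div, div_inv_eq_mul, mul_div_assoc]
  simp only [moment, momentTerm, Fin.prod_univ_succAbove _ l, Pi.smul_apply, smul_eq_mul, hl]
  rw [tsum_eq_single 0 fun ν hν => by simp [hν]]
  simp only [if_true, zpow_zero, mul_one, thetaQuot_zero, Fin.removeNth_apply, hnum, hden]

lemma momentDet_smul_cons_inv (hq0 : q ≠ 0) (hq : ‖q‖ < 1) {b : Fin (n + 2) → ℂ}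
    {x : Fin (n + 1) → ℂ} (hx : ∀ i, x i ≠ 0) (hb : ∀ j, b j ≠ 0) (l : Fin (n + 2)) :
    momentDet q (q • b) b (Fin.cons (b l)⁻¹ x) = (-(b l)⁻¹) ^ (n + 1) * (qp q q ^ 2 *
      ∏ j, qp q (q * (l.removeNth b j / b l)) * qp q (q * (b l / l.removeNth b j))) *
      (∏ i, th q (x i * b l)) * momentDet q (q • l.removeNth b) (l.removeNth b) x := by
  set K := qp q q ^ 2 *
    ∏ j, qp q (q * (l.removeNth b j / b l)) * qp q (q * (b l / l.removeNth b j))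
  rw [momentDet, det_eq_neg_mul_det_of_rec (κ := (b l)⁻¹ * K) (c := (b l)⁻¹)
    (d := fun i => th q (x i * b l))
    (N := Matrix.of fun k i => momentColumn q (q • l.removeNth b) (l.removeNth b) (x i) k),
    ← momentDet, pow_succ]
  · ring
  · exact prod_eq_zero (mem_univ l) (by simp [hb l, th_one hq])
  · intro k
    change moment q (q • b) b (k + 1) (b l)⁻¹ = _
    rw [moment_smul_inv hq0 hq hb, pow_succ, mul_assoc]
  · intro i
    change ∏ j, th q (x i * b j) = _ * ∏ j, th q (x i * l.removeNth b j)
    rw [Fin.prod_univ_succAbove _ l]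
    rfl
  · intro k i
    change moment q (q • b) b (k + 2) (x i) = _ * moment q (q • b) b (k + 1) (x i) -
      _ * (_ * moment q (q • l.removeNth b) (l.removeNth b) (k + 1) (x i))
    rw [← mul_sub, ← mul_moment_smul_succ hq0 hq (hx i) hb (by lia) (by lia),
      inv_mul_cancel_left₀ (hb l)]

lemma prod_qp_ne_zero {b : Fin n → ℂ} (hq : ‖q‖ < 1) (hb : ∀ j, b j ≠ 0)
    (hgen : Pairwise fun i j => ∀ m : ℤ, b i ≠ q ^ m * b j) :
    ∏ i, ∏ j, qp q (q * (b i / b j)) ≠ 0 := by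
  refine prod_ne_zero_iff.2 fun i _ => prod_ne_zero_iff.2 fun j _ => ?_
  rcases eq_or_ne i j with rfl | hij
  · rw [div_self (hb i), mul_one]
    exact qp_ne_zero_of_norm_lt_one hq hq
  · refine qp_ne_zero hq fun k hk => hgen hij.symm (k + 1 : ℕ) ?_
    have := hb j
    field_simp at hk
    rw [zpow_natCast, pow_succ, hk]

lemma qp_mul_momentDet_smul (hq0 : q ≠ 0) (hq : ‖q‖ < 1) {x : Fin (n + 1) → ℂ} (hx : ∀ i, x i ≠ 0)
    (hb : ∀ j, b j ≠ 0) :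
    qp q q * momentDet q (q • b) b x =
      (∏ i, ∏ j, qp q (q * (b i / b j))) * momentDet q 0 b x := by
  have hb0 : ∏ j, b j ≠ 0 := prod_ne_zero_iff.2 fun j _ => hb j
  have h := qp_mul_momentDet hq0 hq hx hb (norm_prod_smul_lt hq0 hq hb (by simp))
  simp only [Pi.smul_apply, smul_eq_mul, mul_div_assoc] at h
  rw [prod_mul_distrib, prod_const, card_univ, Fintype.card_fin, pow_succ] at h
  rwa [show (q ^ n)⁻¹ * (q ^ n * q * (∏ j, b j) / ∏ j, b j) = q by field_simp] at h

lemma momentDet_zero_cons_inv (hq0 : q ≠ 0) (hq : ‖q‖ < 1) {b : Fin (n + 2) → ℂ}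
    (hb : ∀ j, b j ≠ 0) (hgen : Pairwise fun i j => ∀ m : ℤ, b i ≠ q ^ m * b j)
    {x : Fin (n + 1) → ℂ} (hx : ∀ i, x i ≠ 0) (l : Fin (n + 2)) :
    momentDet q 0 b (Fin.cons (b l)⁻¹ x) = qp q q * (-(b l)⁻¹) ^ (n + 1) *
      (∏ i, th q (x i * b l)) * momentDet q 0 (l.removeNth b) x := by
  set P := ∏ j, qp q (q * (l.removeNth b j / b l)) * qp q (q * (b l / l.removeNth b j)) with hP
  have hE : ∏ i, ∏ j, qp q (q * (b i / b j)) =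
      qp q q * P * ∏ i, ∏ j, qp q (q * (l.removeNth b i / l.removeNth b j)) := by
    simp only [Fin.prod_univ_succAbove _ l, prod_mul_distrib, hP, div_self (hb l), mul_one,
      Fin.removeNth_apply]
    ring
  have hx' : ∀ i, (Fin.cons (b l)⁻¹ x : Fin (n + 2) → ℂ) i ≠ 0 :=
    Fin.cases (inv_ne_zero (hb l)) hx
  have h := qp_mul_momentDet_smul hq0 hq hx' hb
  rw [momentDet_smul_cons_inv hq0 hq hx hb l, ← hP] at h
  refine mul_left_cancel₀ (prod_qp_ne_zero hq hb hgen) (h.symm.trans ?_)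
  have h' := qp_mul_momentDet_smul (b := l.removeNth b) hq0 hq hx fun j => hb _
  rw [hE]
  linear_combination (-(b l)⁻¹) ^ (n + 1) * (qp q q ^ 2 * P) * (∏ i, th q (x i * b l)) * h'

/-- The right-hand side of the theorem at `α = 0`, with the poles cleared. -/
noncomputable def thetaSide (q : ℂ) (b x : Fin (n + 1) → ℂ) : ℂ :=
  qp q q ^ n * th q ((∏ i, x i) * ∏ j, b j) * ∏ i, ∏ j ∈ Ioi i, x j * th q (x i / x j)

lemma thetaSide_cons {b : Fin (n + 2) → ℂ} (y : ℂ) (x : Fin (n + 1) → ℂ) :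
    thetaSide q b (Fin.cons y x) = qp q q ^ (n + 1) * th q (y * ((∏ i, x i) * ∏ j, b j)) *
      ((∏ i, x i * th q (y / x i)) * ∏ i, ∏ j ∈ Ioi i, x j * th q (x i / x j)) := by
  rw [thetaSide, Fin.prod_cons, Fin.prod_univ_succ fun i => ∏ j ∈ Ioi i, _]
  simp only [Fin.prod_Ioi_zero, Fin.prod_Ioi_succ, Fin.cons_zero, Fin.cons_succ, mul_assoc]

lemma thetaSide_cons_inv (hq0 : q ≠ 0) (hq : ‖q‖ < 1) {b : Fin (n + 2) → ℂ}
    (hb : ∀ j, b j ≠ 0) {x : Fin (n + 1) → ℂ} (hx : ∀ i, x i ≠ 0) (l : Fin (n + 2)) :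
    thetaSide q b (Fin.cons (b l)⁻¹ x) = qp q q * (-(b l)⁻¹) ^ (n + 1) *
      (∏ i, th q (x i * b l)) * thetaSide q (l.removeNth b) x := by
  have hfactor : ∀ i, x i * th q ((b l)⁻¹ / x i) = -(b l)⁻¹ * th q (x i * b l) := fun i => by
    have := hx i
    have := hb l
    rw [inv_div_left, th_inv hq0 hq (mul_ne_zero (hx i) (hb l))]
    field_simp
  have hprod : (b l)⁻¹ * ((∏ i, x i) * ∏ j, b j) = (∏ i, x i) * ∏ j, l.removeNth b j := by
    rw [← Fin.mul_prod_removeNth l b]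
    have := hb l
    field_simp
  rw [thetaSide_cons, hprod, prod_congr rfl fun i _ => hfactor i, prod_mul_distrib, prod_const,
    card_univ, Fintype.card_fin, thetaSide]
  ring

end Recursion

/-! ### Holomorphic functions on `ℂ^*` with prescribed quasi-periodicity -/

section QuasiPeriodic

lemma exists_differentiableOn_eq_mul_of_simple_zeros {U : Set ℂ} {f t : ℂ → ℂ} (hU : IsOpen U)
    (hf : DifferentiableOn ℂ f U) (ht : DifferentiableOn ℂ t U)
    (hzero : ∀ y ∈ U, t y = 0 → f y = 0 ∧ deriv t y ≠ 0) :
    ∃ g : ℂ → ℂ, DifferentiableOn ℂ g U ∧ ∀ y ∈ U, f y = t y * g y := by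
  classical
  refine ⟨fun y => if t y = 0 then deriv f y / deriv t y else f y / t y, fun w hw => ?_,
    fun y hy => ?_⟩
  · have hUw := hU.mem_nhds hw
    by_cases htw : t w = 0
    · obtain ⟨hfw, htw'⟩ := hzero w hw htw
      have hdf := ((Complex.differentiableOn_dslope hUw).2 hf).differentiableAt hUw
      have hdt := ((Complex.differentiableOn_dslope hUw).2 ht).differentiableAt hUw
      have hne : dslope t w w ≠ 0 := by rwa [dslope_same]
      refine ((hdf.div hdt hne).congr_of_eventuallyEq ?_).differentiableWithinAt
      filter_upwards [hdt.continuousAt.eventually_ne hne] with y hy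
      have hfy : (y - w) * dslope f w y = f y := by simpa [hfw] using sub_smul_dslope f w y
      have hty : (y - w) * dslope t w y = t y := by simpa [htw] using sub_smul_dslope t w y
      rcases eq_or_ne y w with rfl | hyw
      · simp [htw]
      · rw [Pi.div_apply, ← hfy, ← hty, if_neg (mul_ne_zero (sub_ne_zero.2 hyw) hy),
          mul_div_mul_left _ _ (sub_ne_zero.2 hyw)]
    · have hdt := ht.differentiableAt hUw
      refine (((hf.differentiableAt hUw).div hdt htw).congr_of_eventuallyEq
        ?_).differentiableWithinAt
      filter_upwards [hdt.continuousAt.eventually_ne htw] with y hy using if_neg hy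
  · by_cases hty : t y = 0
    · rw [hty, (hzero y hy hty).1, zero_mul]
    · simp only [if_neg hty, mul_div_cancel₀ _ hty]

lemma apply_zpow_mul_of_apply_mul {S : Type*} {g : ℂ → S} (hq0 : q ≠ 0)
    (hper : ∀ y, y ≠ 0 → g (q * y) = g y) {y : ℂ} (hy : y ≠ 0) (m : ℤ) :
    g (q ^ m * y) = g y := by
  have hstep : ∀ m : ℤ, g (q ^ (m + 1) * y) = g (q ^ m * y) := fun m => by
    rw [zpow_add_one₀ hq0, mul_comm (q ^ m), mul_assoc]
    exact hper _ (mul_ne_zero (zpow_ne_zero m hq0) hy)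
  induction m with
  | zero => simp
  | succ m ih => rw [hstep, ih]
  | pred m ih => rw [← ih, ← hstep, sub_add_cancel]

lemma apply_eq_apply_of_apply_mul {g : ℂ → ℂ} (hq0 : q ≠ 0) (hq : ‖q‖ < 1)
    (hg : DifferentiableOn ℂ g {0}ᶜ) (hper : ∀ y, y ≠ 0 → g (q * y) = g y) {y z : ℂ} (hy : y ≠ 0)
    (hz : z ≠ 0) : g y = g z := by
  have hcompact : IsCompact (Metric.closedBall (0 : ℂ) 1 \ Metric.ball 0 ‖q‖) :=
    (isCompact_closedBall 0 1).diff Metric.isOpen_ball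
  have hne : Metric.closedBall (0 : ℂ) 1 \ Metric.ball 0 ‖q‖ ⊆ {0}ᶜ := by
    rintro w ⟨-, hw⟩ rfl
    exact hw (Metric.mem_ball_self (norm_pos_iff.2 hq0))
  obtain ⟨C, hC⟩ := hcompact.exists_bound_of_continuousOn (hg.continuousOn.mono hne)
  have hbound : ∀ w, w ≠ 0 → ‖g w‖ ≤ C := fun w hw => by
    obtain ⟨m, hm, hm'⟩ := exists_mem_Ioc_zpow (norm_pos_iff.2 hw)
      ((one_lt_inv₀ (norm_pos_iff.2 hq0)).2 hq)
    rw [inv_zpow] at hm hm'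
    rw [← apply_zpow_mul_of_apply_mul hq0 hper hw (m + 1)]
    have hpos := zpow_pos (norm_pos_iff.2 hq0) m
    refine hC _ ⟨?_, ?_⟩
    · rw [mem_closedBall_zero_iff, norm_mul, norm_zpow]
      exact (le_inv_mul_iff₀ (zpow_pos (norm_pos_iff.2 hq0) _)).1 (hm'.trans_eq (mul_one _).symm)
    · rw [mem_ball_zero_iff, not_lt, norm_mul, norm_zpow, zpow_add_one₀ (norm_ne_zero_iff.2 hq0),
        mul_right_comm]
      exact le_mul_of_one_le_left (norm_nonneg q) ((inv_lt_iff_one_lt_mul₀' hpos).1 hm).le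
  have hentire : Differentiable ℂ fun w => g (Complex.exp w) := fun w =>
    (hg.differentiableAt (isOpen_compl_singleton.mem_nhds (Complex.exp_ne_zero w))).fun_comp' w
      Complex.differentiableAt_exp
  have hbdd : Bornology.IsBounded (Set.range fun w => g (Complex.exp w)) :=
    isBounded_iff_forall_norm_le.2 ⟨C, Set.forall_mem_range.2 fun w =>
      hbound _ (Complex.exp_ne_zero w)⟩
  simpa only [Complex.exp_log hy, Complex.exp_log hz] using
    hentire.apply_eq_apply_of_bounded hbdd (Complex.log y) (Complex.log z)

lemma exists_eq_const_mul_of_apply_mul {f t c : ℂ → ℂ} (hq0 : q ≠ 0) (hq : ‖q‖ < 1)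
    (hf : DifferentiableOn ℂ f {0}ᶜ) (ht : DifferentiableOn ℂ t {0}ᶜ)
    (hzero : ∀ y, y ≠ 0 → t y = 0 → f y = 0 ∧ deriv t y ≠ 0) (hc : ∀ y, y ≠ 0 → c y ≠ 0)
    (hfc : ∀ y, y ≠ 0 → f (q * y) = c y * f y) (htc : ∀ y, y ≠ 0 → t (q * y) = c y * t y) :
    ∃ k, ∀ y, y ≠ 0 → f y = k * t y := by
  obtain ⟨g, hg, hfg⟩ :=
    exists_differentiableOn_eq_mul_of_simple_zeros isOpen_compl_singleton hf ht hzero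
  have hnhds : ∀ {y : ℂ}, y ≠ 0 → {0}ᶜ ∈ 𝓝 y := isOpen_compl_singleton.mem_nhds
  have hper : ∀ y, y ≠ 0 → g (q * y) = g y := fun y hy => by
    have hqy := mul_ne_zero hq0 hy
    have hgq : ContinuousAt (fun y => g (q * y)) y :=
      (hg.differentiableAt (hnhds hqy)).continuousAt.comp_of_eq (by fun_prop) rfl
    have hgy : ContinuousAt g y := (hg.differentiableAt (hnhds hy)).continuousAt
    refine ((hgq.eventuallyEq_nhds_iff_eventuallyEq_nhdsNE hgy).1 ?_).self_of_nhds
    have htne : ∀ᶠ z in 𝓝[≠] y, t z ≠ 0 := by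
      have hty := ht.differentiableAt (hnhds hy)
      by_cases h0 : t y = 0
      · exact hty.hasDerivAt.eventually_ne (hzero y hy h0).2
      · exact (hty.continuousAt.eventually_ne h0).filter_mono nhdsWithin_le_nhds
    filter_upwards [htne, nhdsWithin_le_nhds (hnhds hy)] with z htz hz
    refine mul_left_cancel₀ (mul_ne_zero (hc z hz) htz) ?_
    rw [← htc z hz, ← hfg _ (mul_ne_zero hq0 hz), hfc z hz, hfg z hz, htc z hz, mul_assoc]
  exact ⟨g 1, fun y hy => by
    rw [hfg y hy, mul_comm, apply_eq_apply_of_apply_mul hq0 hq hg hper hy one_ne_zero]⟩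

end QuasiPeriodic

/-! ### Evaluation at `α = 0` -/

section ThetaProduct

variable {ι : Type*} [Fintype ι] {b : ι → ℂ}

lemma prod_th_q_mul (hq0 : q ≠ 0) (hq : ‖q‖ < 1) (hb : ∀ j, b j ≠ 0) {y : ℂ} (hy : y ≠ 0) :
    ∏ j, th q (q * y * b j) = (∏ j, -(y * b j)⁻¹) * ∏ j, th q (y * b j) := by
  rw [← prod_mul_distrib]
  refine prod_congr rfl fun j _ => ?_
  rw [mul_assoc, th_q_mul hq0 hq (mul_ne_zero hy (hb j))]
  ring

lemma differentiableAt_th_mul_const (hq : ‖q‖ < 1) {y c : ℂ} (hy : y ≠ 0) (hc : c ≠ 0) :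
    DifferentiableAt ℂ (fun y => th q (y * c)) y :=
  (differentiableAt_th hq (mul_ne_zero hy hc)).fun_comp' y (by fun_prop)

lemma differentiableAt_prod_th (hq : ‖q‖ < 1) (hb : ∀ j, b j ≠ 0) {y : ℂ} (hy : y ≠ 0) :
    DifferentiableAt ℂ (fun y => ∏ j, th q (y * b j)) y :=
  DifferentiableAt.fun_finsetProd fun j _ => differentiableAt_th_mul_const hq hy (hb j)

lemma deriv_prod_th_ne_zero (hq0 : q ≠ 0) (hq : ‖q‖ < 1) (hb : ∀ j, b j ≠ 0)
    (hgen : Pairwise fun i j => ∀ m : ℤ, b i ≠ q ^ m * b j) (l : ι) (m : ℤ) :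
    deriv (fun y => ∏ j, th q (y * b j)) (q ^ m * (b l)⁻¹) ≠ 0 := by
  classical
  set y := q ^ m * (b l)⁻¹ with hy_def
  have hy : y ≠ 0 := mul_ne_zero (zpow_ne_zero m hq0) (inv_ne_zero (hb l))
  have hyl : y * b l = q ^ m := inv_mul_cancel_right₀ (hb l) _
  have hth : th q (y * b l) = 0 := by
    have hper := apply_zpow_mul_of_apply_mul (g := fun z => th q z = 0) hq0
      (fun z hz => by simp [th_q_mul hq0 hq hz, hz]) one_ne_zero m
    rw [hyl, ← mul_one (q ^ m)]
    exact hper.mpr (th_one hq)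
  have hrest : ∏ j ∈ univ.erase l, th q (y * b j) ≠ 0 := by
    refine prod_ne_zero_iff.2 fun j hj => th_ne_zero hq0 hq fun k hk =>
      hgen (ne_of_mem_erase hj) (k - m) ?_
    rw [hy_def] at hk
    have := hb l
    rw [zpow_sub₀ hq0]
    field_simp at hk ⊢
    exact hk
  have hderiv : deriv (fun y => th q (y * b l)) y ≠ 0 := by
    simp only [mul_comm _ (b l), deriv_comp_mul_left] at hth ⊢
    exact smul_ne_zero (hb l) (deriv_th_ne_zero hq0 hq (mul_ne_zero (hb l) hy) hth)
  have hdiff : DifferentiableAt ℂ (fun y => ∏ j ∈ univ.erase l, th q (y * b j)) y :=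
    DifferentiableAt.fun_finsetProd fun j _ => differentiableAt_th_mul_const hq hy (hb j)
  rw [funext fun y => (mul_prod_erase univ (fun j => th q (y * b j)) (mem_univ l)).symm,
    deriv_fun_mul (differentiableAt_th_mul_const hq hy (hb l)) hdiff, hth, zero_mul, add_zero]
  exact mul_ne_zero hderiv hrest

lemma exists_eq_const_mul_prod_th (hq0 : q ≠ 0) (hq : ‖q‖ < 1) (hb : ∀ j, b j ≠ 0)
    (hgen : Pairwise fun i j => ∀ m : ℤ, b i ≠ q ^ m * b j) {F : ℂ → ℂ}
    (hF : ∀ y, y ≠ 0 → DifferentiableAt ℂ F y)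
    (hFq : ∀ y, y ≠ 0 → F (q * y) = (∏ j, -(y * b j)⁻¹) * F y) (hF0 : ∀ l, F (b l)⁻¹ = 0) :
    ∃ k, ∀ y, y ≠ 0 → F y = k * ∏ j, th q (y * b j) := by
  have hc : ∀ y, y ≠ 0 → ∏ j, -(y * b j)⁻¹ ≠ 0 := fun y hy => prod_ne_zero_iff.2 fun j _ =>
    neg_ne_zero.2 (inv_ne_zero (mul_ne_zero hy (hb j)))
  refine exists_eq_const_mul_of_apply_mul hq0 hq
    (fun y hy => (hF y hy).differentiableWithinAt)
    (fun y hy => (differentiableAt_prod_th hq hb hy).differentiableWithinAt)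
    (fun y hy hzero => ?_) hc hFq fun y hy => prod_th_q_mul hq0 hq hb hy
  obtain ⟨l, -, hl⟩ := prod_eq_zero_iff.1 hzero
  obtain ⟨m, hm⟩ : ∃ m : ℤ, y * b l = q ^ m := by
    contrapose! hl
    exact th_ne_zero hq0 hq hl
  obtain rfl : y = q ^ m * (b l)⁻¹ := (eq_mul_inv_iff_mul_eq₀ (hb l)).2 hm
  refine ⟨?_, deriv_prod_th_ne_zero hq0 hq hb hgen l m⟩
  have hper := apply_zpow_mul_of_apply_mul (g := fun z => F z = 0) hq0
    (fun z hz => by rw [hFq z hz, mul_eq_zero, or_iff_right (hc z hz)]) (inv_ne_zero (hb l)) m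
  exact hper.mpr (hF0 l)

end ThetaProduct

section EvaluationAtZero

variable {n : ℕ} {α b : Fin (n + 1) → ℂ}

lemma differentiableAt_momentColumn (hq0 : q ≠ 0) (hq : ‖q‖ < 1) (hb : ∀ j, b j ≠ 0)
    (hdom : ‖∏ j, α j‖ < ‖q‖ ^ n * ‖∏ j, b j‖) {y : ℂ} (hy : y ≠ 0) (k : Fin (n + 1)) :
    DifferentiableAt ℂ (fun y => momentColumn q α b y k) y := by
  refine Fin.cases ?_ (fun k => ?_) k
  · exact differentiableAt_prod_th hq hb hy
  · exact differentiableAt_moment hq0 hq hy hb k.val.succ_ne_zero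
      (lt_norm_pow_mul_of_le hq k.is_lt hdom)

lemma momentColumn_q_mul (hq0 : q ≠ 0) (hq : ‖q‖ < 1) (hb : ∀ j, b j ≠ 0) {y : ℂ} (hy : y ≠ 0)
    (k : Fin (n + 1)) :
    momentColumn q α b (q * y) k = (∏ j, -(y * b j)⁻¹) * momentColumn q α b y k :=
  Fin.cases (prod_th_q_mul hq0 hq hb hy) (fun _ => moment_q_mul hq0 hy hb) k

lemma exists_momentDet_cons_eq_sum (q : ℂ) (α b : Fin (n + 1) → ℂ) (x : Fin n → ℂ) :
    ∃ C : Fin (n + 1) → ℂ, ∀ y,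
      momentDet q α b (Fin.cons y x) = ∑ k, momentColumn q α b y k * C k := by
  refine ⟨fun k => (-1) ^ (k : ℕ) * (Matrix.of fun (k' i : Fin n) =>
    momentColumn q α b (x i) (k.succAbove k')).det, fun y => ?_⟩
  rw [momentDet, Matrix.det_succ_column_zero]
  refine sum_congr rfl fun k _ => ?_
  rw [mul_right_comm, mul_comm]
  rfl

lemma differentiableAt_thetaSide_cons (hq : ‖q‖ < 1) {b : Fin (n + 2) → ℂ} {x : Fin (n + 1) → ℂ}
    (hb : ∀ j, b j ≠ 0) (hx : ∀ i, x i ≠ 0) {y : ℂ} (hy : y ≠ 0) :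
    DifferentiableAt ℂ (fun y => thetaSide q b (Fin.cons y x)) y := by
  have hxb : (∏ i, x i) * ∏ j, b j ≠ 0 := mul_ne_zero
    (prod_ne_zero_iff.2 fun i _ => hx i) (prod_ne_zero_iff.2 fun j _ => hb j)
  have hfactor : DifferentiableAt ℂ (fun y => ∏ i, x i * th q (y / x i)) y :=
    DifferentiableAt.fun_finsetProd fun i _ =>
      (differentiableAt_th_mul_const hq hy (inv_ne_zero (hx i))).const_mul (x i)
  simp only [thetaSide_cons]
  exact ((differentiableAt_th_mul_const hq hy hxb).const_mul _).fun_mul (hfactor.mul_const _)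

lemma thetaSide_cons_q_mul (hq0 : q ≠ 0) (hq : ‖q‖ < 1) {b : Fin (n + 2) → ℂ}
    {x : Fin (n + 1) → ℂ} (hb : ∀ j, b j ≠ 0) (hx : ∀ i, x i ≠ 0) {y : ℂ} (hy : y ≠ 0) :
    thetaSide q b (Fin.cons (q * y) x) =
      (∏ j, -(y * b j)⁻¹) * thetaSide q b (Fin.cons y x) := by
  have hX : ∏ i, x i ≠ 0 := prod_ne_zero_iff.2 fun i _ => hx i
  have hB : ∏ j, b j ≠ 0 := prod_ne_zero_iff.2 fun j _ => hb j
  have hfactor : ∏ i, x i * th q (q * y / x i) =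
      (∏ i, -(y * (x i)⁻¹)⁻¹) * ∏ i, x i * th q (y / x i) := by
    have h := prod_th_q_mul hq0 hq (fun i => inv_ne_zero (hx i)) hy
    simp only [prod_mul_distrib, div_eq_mul_inv, h]
    ring
  rw [thetaSide_cons, thetaSide_cons, hfactor, mul_assoc q,
    th_q_mul hq0 hq (mul_ne_zero hy (mul_ne_zero hX hB))]
  simp only [prod_neg, prod_inv_distrib, prod_mul_distrib, prod_const, card_univ, Fintype.card_fin]
  field_simp
  ring

lemma norm_prod_zero_lt (hq0 : q ≠ 0) (hb : ∀ j, b j ≠ 0) (s : ℕ) :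
    ‖∏ j, (0 : Fin (n + 1) → ℂ) j‖ < ‖q‖ ^ s * ‖∏ j, b j‖ := by
  have hB : 0 < ‖∏ j, b j‖ := norm_pos_iff.2 (prod_ne_zero_iff.2 fun j _ => hb j)
  simpa using mul_pos (pow_pos (norm_pos_iff.2 hq0) s) hB

lemma exists_momentDet_zero_cons_sub_eq (hq0 : q ≠ 0) (hq : ‖q‖ < 1) {b : Fin (n + 2) → ℂ}
    {x : Fin (n + 1) → ℂ} (hb : ∀ j, b j ≠ 0)
    (hgen : Pairwise fun i j => ∀ m : ℤ, b i ≠ q ^ m * b j) (hx : ∀ i, x i ≠ 0)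
    (hrec : ∀ l : Fin (n + 2),
      momentDet q 0 (l.removeNth b) x = thetaSide q (l.removeNth b) x) :
    ∃ k, ∀ y, y ≠ 0 → momentDet q 0 b (Fin.cons y x) - thetaSide q b (Fin.cons y x) =
      k * ∏ j, th q (y * b j) := by
  obtain ⟨C, hC⟩ := exists_momentDet_cons_eq_sum q 0 b x
  refine exists_eq_const_mul_prod_th hq0 hq hb hgen (fun y hy => ?_) (fun y hy => ?_) fun l => ?_
  · simp only [hC]
    exact (DifferentiableAt.fun_sum fun k _ => (differentiableAt_momentColumn hq0 hq hb
      (norm_prod_zero_lt hq0 hb _) hy k).mul_const _).fun_sub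
      (differentiableAt_thetaSide_cons hq hb hx hy)
  · simp only [hC, momentColumn_q_mul hq0 hq hb hy, thetaSide_cons_q_mul hq0 hq hb hx hy,
      mul_sub, mul_sum, mul_assoc]
  · rw [momentDet_zero_cons_inv hq0 hq hb hgen hx, thetaSide_cons_inv hq0 hq hb hx, hrec, sub_self]

lemma momentDet_zero_of_pairwise (hq0 : q ≠ 0) (hq : ‖q‖ < 1) {n : ℕ} {b x : Fin (n + 1) → ℂ}
    (hb : ∀ j, b j ≠ 0) (hgen : Pairwise fun i j => ∀ m : ℤ, b i ≠ q ^ m * b j)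
    (hx : ∀ i, x i ≠ 0) (hxb : ∀ i j, th q (x i * b j) ≠ 0) :
    momentDet q 0 b x = thetaSide q b x := by
  induction n with
  | zero => simp [momentDet, momentColumn, thetaSide]
  | succ n ih =>
    obtain ⟨x₀, x, rfl⟩ := Fin.exists_cons x
    obtain ⟨hx₀, hx⟩ := Fin.forall_fin_succ.1 hx
    obtain ⟨-, hxb⟩ := Fin.forall_fin_succ.1 hxb
    simp only [Fin.cons_zero, Fin.cons_succ] at hx₀ hx hxb
    obtain ⟨k, hk⟩ := exists_momentDet_zero_cons_sub_eq hq0 hq hb hgen hx fun l =>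
      ih (fun _ => hb _) (fun i j hij => hgen (l.succAbove_right_injective.ne hij)) hx
        fun i _ => hxb i _
    -- For `y = x 0` two columns coincide, and the product of thetas contains `θ(1) = 0`.
    have hdet : momentDet q 0 b (Fin.cons (x 0) x) = 0 :=
      Matrix.det_zero_of_column_eq (Fin.succ_ne_zero 0).symm fun _ => rfl
    have htheta : ∏ i, x i * th q (x 0 / x i) = 0 :=
      prod_eq_zero (mem_univ 0) (by rw [div_self (hx 0), th_one hq, mul_zero])
    have hkx := hk (x 0) (hx 0)
    rw [hdet, thetaSide_cons, htheta, zero_mul, mul_zero, sub_zero, eq_comm, mul_eq_zero,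
      or_iff_left (prod_ne_zero_iff.2 fun j _ => hxb 0 j)] at hkx
    rw [← sub_eq_zero, hk x₀ hx₀, hkx, zero_mul]

lemma countable_setOf_not_pairwise (hb : ∀ j, b j ≠ 0) :
    {t : ℂ | ¬ Pairwise fun i j : Fin (n + 1) => ∀ m : ℤ,
      b i * (1 + i * t) ≠ q ^ m * (b j * (1 + j * t))}.Countable := by
  have hsub : ∀ i j : Fin (n + 1), i ≠ j → ∀ m : ℤ,
      {t : ℂ | b i * (1 + i * t) = q ^ m * (b j * (1 + j * t))}.Subsingleton := by
    intro i j hij m t ht s hs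
    have hslope : b i * i - q ^ m * b j * j ≠ 0 := fun h => by
      have hconst : b i = q ^ m * b j := by
        linear_combination (Set.mem_ofPred.1 ht) - t * h
      rw [← hconst, ← mul_sub, mul_eq_zero, or_iff_right (hb i), sub_eq_zero] at h
      exact hij (Fin.ext (Nat.cast_injective h))
    refine mul_left_cancel₀ hslope ?_
    linear_combination (Set.mem_ofPred.1 ht) - (Set.mem_ofPred.1 hs)
  refine (Set.countable_iUnion fun i => Set.countable_iUnion fun j => Set.countable_iUnion
    fun hij : i ≠ j => Set.countable_iUnion fun m => (hsub i j hij m).countable).mono ?_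
  intro t ht
  simpa [Pairwise] using ht

lemma frequently_pairwise_ne (hb : ∀ j, b j ≠ 0) :
    ∃ᶠ b' in 𝓝 b, Pairwise fun i j : Fin (n + 1) => ∀ m : ℤ, b' i ≠ q ^ m * b' j := by
  have hdense : ∃ᶠ t in 𝓝 (0 : ℂ), Pairwise fun i j : Fin (n + 1) => ∀ m : ℤ,
      b i * (1 + i * t) ≠ q ^ m * (b j * (1 + j * t)) := by
    simpa using mem_closure_iff_frequently.1
      ((countable_setOf_not_pairwise (q := q) hb).dense_compl ℂ 0)
  have hB : Tendsto (fun (t : ℂ) (j : Fin (n + 1)) => b j * (1 + j * t)) (𝓝 0) (𝓝 b) :=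
    (by fun_prop : Continuous _).tendsto' _ _ (by simp)
  exact hB.frequently hdense

lemma momentDet_zero (hq0 : q ≠ 0) (hq : ‖q‖ < 1) {b x : Fin (n + 1) → ℂ}
    (hb : ∀ j, b j ≠ 0) (hx : ∀ i, x i ≠ 0) (hxb : ∀ i j, th q (x i * b j) ≠ 0) :
    momentDet q 0 b x = thetaSide q b x := by
  have hth : ∀ {f : (Fin (n + 1) → ℂ) → ℂ}, Continuous f → f b ≠ 0 →
      ContinuousAt (fun b' => th q (f b')) b := fun {f} hf hfb =>
    (differentiableAt_th hq hfb).continuousAt.comp hf.continuousAt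
  have hmoment : ContinuousAt (fun b' => momentDet q 0 b' x) b :=
    (continuousAt_momentDet hq0 hq hx hb (norm_prod_zero_lt hq0 hb n)).comp_of_eq
      (f := fun b' => (0, b', x)) (by fun_prop) rfl
  have htheta : ContinuousAt (fun b' => thetaSide q b' x) b :=
    ((hth (f := fun b' => (∏ i, x i) * ∏ j, b' j) (by fun_prop) (mul_ne_zero
      (prod_ne_zero_iff.2 fun i _ => hx i) (prod_ne_zero_iff.2 fun j _ => hb j))).const_mul
      _).mul_const _
  have hb_near : ∀ᶠ b' in 𝓝 b, (∀ j, b' j ≠ 0) ∧ ∀ i j, th q (x i * b' j) ≠ 0 :=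
    (eventually_all.2 fun j => (continuous_apply j).continuousAt.eventually_ne (hb j)).and <|
      eventually_all.2 fun i => eventually_all.2 fun j =>
        (hth (by fun_prop) (mul_ne_zero (hx i) (hb j))).eventually_ne (hxb i j)
  refine tendsto_nhds_unique_of_frequently_eq hmoment htheta ?_
  exact ((frequently_pairwise_ne hb).and_eventually hb_near).mono fun b' ⟨hgen, hb', hxb'⟩ =>
    momentDet_zero_of_pairwise hq0 hq hb' hgen hx hxb'

end EvaluationAtZero

/-! ### The multiple series as a determinant of moments -/

section MultipleSeries

lemma summable_norm_and_tsum_pi_prod {R κ : Type*} [NormedCommRing R] [CompleteSpace R] {n : ℕ}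
    {f : Fin n → κ → R} (hf : ∀ i, Summable fun ν => ‖f i ν‖) :
    (Summable fun ν : Fin n → κ => ‖∏ i, f i (ν i)‖) ∧
      ∑' ν : Fin n → κ, ∏ i, f i (ν i) = ∏ i, ∑' ν, f i ν := by
  induction n with
  | zero => exact ⟨.of_finite, by simp⟩
  | succ n ih =>
    obtain ⟨hsum, htsum⟩ := ih (f := fun i => f i.succ) fun i => hf i.succ
    set g : (Fin n → κ) → R := fun ν => ∏ i, f i.succ (ν i)
    set e := Fin.consEquiv fun _ : Fin (n + 1) => κ
    have hcons : ∀ p, ∏ i, f i (e p i) = f 0 p.1 * g p.2 := fun p => Fin.prod_univ_succ _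
    constructor
    · rw [← e.summable_iff]
      exact ((hf 0).mul_norm hsum).congr fun p => congrArg norm (hcons p).symm
    · rw [Fin.prod_univ_succ, ← htsum, ← e.tsum_eq, tsum_mul_tsum_of_summable_norm (hf 0) hsum]
      exact tsum_congr hcons

lemma summable_det_and_tsum_det {R κ : Type*} [NormedCommRing R] [CompleteSpace R] {n : ℕ}
    {f : Fin n → Fin n → κ → R} (hf : ∀ k i, Summable fun ν => ‖f k i ν‖) :
    (Summable fun ν : Fin n → κ => (Matrix.of fun k i => f k i (ν i)).det) ∧
      ∑' ν : Fin n → κ, (Matrix.of fun k i => f k i (ν i)).det =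
        (Matrix.of fun k i => ∑' ν, f k i ν).det := by
  have hprod := fun σ : Equiv.Perm (Fin n) =>
    summable_norm_and_tsum_pi_prod (f := fun i => f (σ i) i) fun i => hf _ i
  have hsum := fun σ : Equiv.Perm (Fin n) => (hprod σ).1.of_norm.mul_left (σ.sign : R)
  simp only [Matrix.det_apply', Matrix.of_apply]
  refine ⟨summable_sum fun σ _ => hsum σ, ?_⟩
  rw [Summable.tsum_finsetSum fun σ _ => hsum σ]
  exact sum_congr rfl fun σ _ => by rw [(hprod σ).1.of_norm.tsum_mul_left, (hprod σ).2]

variable {n : ℕ} {a b : Fin (n + 1) → ℂ} {x : Fin n → ℂ}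

lemma prod_th_mul_daTerm (hq0 : q ≠ 0) (hq : ‖q‖ < 1) (hxb : ∀ i j, th q (x i * b j) ≠ 0)
    (hx : ∀ i, x i ≠ 0) (hb : ∀ j, b j ≠ 0) (ν : Fin n → ℤ) :
    (∏ i, ∏ j, th q (x i * b j)) * daTerm q a b x ν = (Matrix.of fun k i : Fin n =>
      momentTerm q (fun j => q * (a j)⁻¹) b (k + 1) (x i) (ν i)).det := by
  have hfactor : ∀ i j, th q (x i * b j) *
      (qp q (q * (a j)⁻¹ * (x i * q ^ ν i)) / qp q (b j * (x i * q ^ ν i))) =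
      qp q (q * (a j)⁻¹ * (x i * q ^ ν i)) * thetaQuot q (ν i) (x i * b j) := fun i j => by
    have hth := qp_mul_thetaQuot hq0 hq (mul_ne_zero (hx i) (hb j)) (ν i)
    have hqp := left_ne_zero_of_mul (hth.trans_ne (hxb i j))
    rw [← hth, show b j * (x i * q ^ ν i) = x i * b j * q ^ ν i by ring]
    field_simp
  rw [daTerm, ← Matrix.det_vandermonde fun i => x i * q ^ ν i, ← mul_assoc, ← prod_mul_distrib,
    ← Matrix.det_transpose, ← Matrix.det_mul_row]
  refine congrArg Matrix.det (Matrix.ext fun k i => ?_)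
  simp only [Matrix.of_apply, Matrix.transpose_apply, Matrix.vandermonde_apply, momentTerm,
    ← hfactor, prod_mul_distrib]
  ring

lemma summable_daTerm_and_tsum_daTerm (hq0 : q ≠ 0) (hq : ‖q‖ < 1)
    (hxb : ∀ i j, th q (x i * b j) ≠ 0) (hx : ∀ i, x i ≠ 0) (hb : ∀ j, b j ≠ 0)
    (hdom : ‖∏ j, q * (a j)⁻¹‖ < ‖q‖ ^ n * ‖∏ j, b j‖) :
    Summable (daTerm q a b x) ∧ (∏ i, ∏ j, th q (x i * b j)) * ∑' ν, daTerm q a b x ν =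
      (Matrix.of fun k i : Fin n => moment q (fun j => q * (a j)⁻¹) b (k + 1) (x i)).det := by
  obtain ⟨hsum, htsum⟩ := summable_det_and_tsum_det fun k i : Fin n =>
    summable_norm_momentTerm hq0 hq (hx i) hb k.val.succ_ne_zero
      (lt_norm_pow_mul_of_le hq k.is_lt hdom)
  have hθ : ∏ i, ∏ j, th q (x i * b j) ≠ 0 :=
    prod_ne_zero_iff.2 fun i _ => prod_ne_zero_iff.2 fun j _ => hxb i j
  simp only [Nat.succ_eq_add_one, ← prod_th_mul_daTerm hq0 hq hxb hx hb] at hsum htsum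
  rw [summable_mul_left_iff hθ] at hsum
  exact ⟨hsum, by rw [← hsum.tsum_mul_left, htsum]; rfl⟩

end MultipleSeries

section Assembly

variable {n : ℕ} {a b x : Fin (n + 1) → ℂ}

lemma prod_th_mul_sum_tsum_daTerm (hq0 : q ≠ 0) (hq : ‖q‖ < 1)
    (hxb : ∀ i j, th q (x i * b j) ≠ 0) (hx : ∀ i, x i ≠ 0) (hb : ∀ j, b j ≠ 0)
    (hdom : ‖∏ j, q * (a j)⁻¹‖ < ‖q‖ ^ n * ‖∏ j, b j‖) :
    (∏ i, ∏ j, th q (x i * b j)) * ∑ i : Fin (n + 1), (-1) ^ (i : ℕ) *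
      ∑' ν, daTerm q a b (fun k => x (i.succAbove k)) ν =
      momentDet q (fun j => q * (a j)⁻¹) b x := by
  rw [momentDet, Matrix.det_succ_row_zero, mul_sum]
  refine sum_congr rfl fun i _ => ?_
  obtain ⟨-, htsum⟩ := summable_daTerm_and_tsum_daTerm (a := a)
    (x := fun k => x (i.succAbove k)) hq0 hq (fun _ => hxb _) (fun _ => hx _) hb hdom
  change _ = (-1) ^ (i : ℕ) * (∏ j, th q (x i * b j)) * Matrix.det (Matrix.of fun k l : Fin n =>
    moment q (fun j => q * (a j)⁻¹) b (k + 1) (x (i.succAbove l)))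
  rw [← htsum, Fin.prod_univ_succAbove _ i]
  ring

lemma prod_mul_inv_eq (q : ℂ) (a : Fin (n + 1) → ℂ) :
    ∏ j, q * (a j)⁻¹ = q ^ (n + 1) * (∏ j, a j)⁻¹ := by
  simp only [prod_mul_distrib, prod_inv_distrib, Fin.prod_const]

lemma norm_prod_mul_inv_lt (hq0 : q ≠ 0) (hbal : ‖q‖ < ‖(∏ i, a i) * ∏ i, b i‖) :
    ‖∏ j, q * (a j)⁻¹‖ < ‖q‖ ^ n * ‖∏ j, b j‖ := by
  have hA := left_ne_zero_of_mul (norm_pos_iff.1 ((norm_nonneg q).trans_lt hbal))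
  rw [prod_mul_inv_eq, pow_succ, mul_assoc, norm_mul, norm_pow]
  gcongr
  rwa [norm_mul, norm_inv, ← div_eq_mul_inv, div_lt_iff₀' (norm_pos_iff.2 hA), ← norm_mul]

lemma sum_tsum_daTerm (hq0 : q ≠ 0) (hq : ‖q‖ < 1) (hbal : ‖q‖ < ‖(∏ i, a i) * ∏ i, b i‖)
    (hx : ∀ i, x i ≠ 0) (hb : ∀ j, b j ≠ 0) (hxb : ∀ i j, th q (x i * b j) ≠ 0) :
    ∑ i : Fin (n + 1), (-1) ^ (i : ℕ) * ∑' ν, daTerm q a b (fun k => x (i.succAbove k)) ν =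
      (∏ i, ∏ j, qp q (q * (a i)⁻¹ * (b j)⁻¹)) * thetaSide q b x /
        (qp q (q * (∏ i, a i)⁻¹ * (∏ i, b i)⁻¹) * ∏ i, ∏ j, th q (x i * b j)) := by
  have hdom := norm_prod_mul_inv_lt hq0 hbal
  have harg : (q ^ n)⁻¹ * (∏ j, q * (a j)⁻¹) / ∏ j, b j = q * (∏ i, a i)⁻¹ * (∏ i, b i)⁻¹ := by
    rw [prod_mul_inv_eq, pow_succ]
    field_simp
  have hsmall : ‖q * (∏ i, a i)⁻¹ * (∏ i, b i)⁻¹‖ < 1 := by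
    rw [mul_assoc, ← mul_inv, norm_mul, norm_inv, ← div_eq_mul_inv]
    exact (div_lt_one ((norm_nonneg q).trans_lt hbal)).2 hbal
  have hΘ : ∏ i, ∏ j, th q (x i * b j) ≠ 0 :=
    prod_ne_zero_iff.2 fun i _ => prod_ne_zero_iff.2 fun j _ => hxb i j
  have hmain := qp_mul_momentDet hq0 hq hx hb hdom
  rw [harg, ← prod_th_mul_sum_tsum_daTerm hq0 hq hxb hx hb hdom,
    momentDet_zero hq0 hq hb hx hxb] at hmain
  refine eq_div_of_mul_eq (mul_ne_zero (qp_ne_zero_of_norm_lt_one hq hsmall) hΘ) ?_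
  rw [mul_comm, mul_assoc, hmain]
  simp only [div_eq_mul_inv]

theorem bilateral_dixon_anderson_general (hq0 : q ≠ 0) (hq : ‖q‖ < 1)
    (hbal : ‖q‖ < ‖(∏ i, a i) * ∏ i, b i‖) (hx : ∀ i, x i ≠ 0)
    (hxb : ∀ i j, ∀ m : ℤ, x i * b j ≠ q ^ m) :
    (∀ i : Fin (n + 1), Summable (daTerm q a b fun k => x (i.succAbove k))) ∧
      (∑ i : Fin (n + 1), (-1) ^ (i : ℕ) * daSum q a b fun k => x (i.succAbove k)) =
        (1 - q) ^ n * qp q q ^ n * (∏ i, ∏ j, qp q (q * (a i)⁻¹ * (b j)⁻¹)) /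
            qp q (q * (∏ i, a i)⁻¹ * (∏ i, b i)⁻¹) *
          (th q ((∏ i, x i) * ∏ i, b i) / ∏ i, ∏ j, th q (x i * b j)) *
          ∏ i, ∏ j ∈ Ioi i, x j * th q (x i / x j) := by
  have hB := right_ne_zero_of_mul (norm_pos_iff.1 ((norm_nonneg q).trans_lt hbal))
  have hb : ∀ j, b j ≠ 0 := fun j => prod_ne_zero_iff.1 hB j (mem_univ j)
  have hth : ∀ i j, th q (x i * b j) ≠ 0 := fun i j => th_ne_zero hq0 hq (hxb i j)
  refine ⟨fun i => (summable_daTerm_and_tsum_daTerm hq0 hq (fun _ => hth _) (fun _ => hx _) hb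
    (norm_prod_mul_inv_lt hq0 hbal)).1, ?_⟩
  simp only [daSum, mul_left_comm _ ((1 - q) ^ n), ← mul_sum]
  rw [sum_tsum_daTerm hq0 hq hbal hx hb hth, thetaSide]
  ring

end Assembly

end

/-- Bilateral extension of Evans's q-Dixon–Anderson integral. -/
theorem bilateral_dixon_anderson
    (q : ℝ) (hq0 : 0 < q) (hq1 : q < 1) (n : ℕ) (hn : 1 ≤ n)
    (a b : Fin (n + 1) → ℂ) (ha : ∀ i, a i ≠ 0) (hb : ∀ i, b i ≠ 0)
    (hbal : (q : ℝ) < ‖(∏ i, a i) * ∏ i, b i‖)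
    (x : Fin (n + 1) → ℂ) (hx : ∀ i, x i ≠ 0)
    (hxb : ∀ i j, ∀ m : ℤ, x i * b j ≠ (q : ℂ) ^ m) :
    (∀ i : Fin (n + 1), Summable (daTerm (q : ℂ) a b fun k => x (i.succAbove k))) ∧
      (∑ i : Fin (n + 1), (-1 : ℂ) ^ (i : ℕ) * daSum (q : ℂ) a b fun k => x (i.succAbove k)) =
        (1 - (q : ℂ)) ^ n * qp (q : ℂ) (q : ℂ) ^ n *
            (∏ i, ∏ j, qp (q : ℂ) ((q : ℂ) * (a i)⁻¹ * (b j)⁻¹)) /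
            qp (q : ℂ) ((q : ℂ) * (∏ i, a i)⁻¹ * (∏ i, b i)⁻¹) *
          (th (q : ℂ) ((∏ i, x i) * ∏ i, b i) / ∏ i, ∏ j, th (q : ℂ) (x i * b j)) *
          ∏ i, ∏ j ∈ Finset.Ioi i, x j * th (q : ℂ) (x i / x j) := by
  exact bilateral_dixon_anderson_general (Complex.ofReal_ne_zero.2 hq0.ne')
    (by simpa [abs_of_pos hq0] using hq1) (by simpa [abs_of_pos hq0] using hbal) hx hxb
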